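/- Let k ≥ 2, m ≥ 2 and n ≥ 1 be integers. If m does not divide (C(2n, n))^{⌊k/2⌋}, where C(2n, n) is the central binomial coefficient, then TC_k(L^{2n+1}_m) = k·(2n+1). -/

import Mathlib

/-! Write `L` for the lens space, `S` for the sphere covering it and `N = k (2n + 1)` for the dimension
of `L ^ k`. The two inequalities are independent; only the lower bound uses the hypothesis on `m`.

**Lower bound** (`Sph.lower_bound`). Let `U` be an open subset of `L ^ k` over which `π_k` has a
section. Lifting its paths to `S` and comparing the lifts with the entries of a tuple gives a
locally constant function `a` on the preimage of `U` in `S ^ k`, with values in `(ZMod m) ^ k`,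
which is equivariant up to the diagonal (`Sph.exists_shift`). Hence all the differences
`a l - a l'` are honestly equivariant, and the class `x_{l,l'}` of degree one in the cohomology of
`L ^ k` that is the difference of the generators of the `l`-th and the `l'`-th factor is represented
by a cocycle vanishing on all small simplices inside the preimage of `U`; its Bockstein `y_{l,l'}`
has a representative vanishing on the small simplices inside either of two such sets
(`Coch.xx`, `Coch.yy`). Given a covering by at most `N - 1` such sets, the product of the `k - 1`
classes `x_{l,0}`, of the powers `y_{2s,2s+1} ^ (2n)` for `s < k / 2`, and, for odd `k`, of
`y_{k-1,0} ^ n` therefore has a representative that vanishes on all small simplices: it uses up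
`k - 1 + 2nk = N - 1` sets. On the other hand its value on the product of one cell of dimension `2n`
and `k - 1` cells of dimension `2n + 1` is, up to sign, the coefficient of `∏ z_l ^ n` in
`∏ (z_{2s} - z_{2s+1}) ^ (2n)`, that is, `C(2n, n) ^ (k / 2)` (`CellMoves.dvd_choose`), so `m` would
divide this number.

Singular cohomology is replaced by cochains on finite tuples of points of `S ^ k`. The cells of the
minimal resolution of the cyclic group are realised by iterated prism operators for small rotations
and for discretised cones over subspheres (`CellMoves.Q`), which on normalised cochains satisfy the
boundary formula of the periodic resolution (`CellMoves.Q_d`). Since each single step moves points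
by a small distance, a cochain vanishing on small tuples evaluates to zero on these cells
(`CellMoves.Small.ev`), and a Lebesgue number makes the small tuples subordinate to the covering.

**Upper bound** (`Sph.upper_bound`). For `v` in `S ^ k` let `i_l` be the index of the last nonzero
coordinate of the entry `v_l`, let `u_l` be the `m`-th power of its phase, and let `p` be the number
of distinct `u_l`. The level `2 ∑ i_l + p - 1` takes at most `N` values, and the strata with a fixed
level, indexed by the `i_l` and the set of all `l` with `u_l = u_0`, are separated: none meets the
closure of another (`Sph.eventually_type`). They are unions of fibres over `L ^ k`, so they have
disjoint open neighbourhoods with disjoint images in `L ^ k`. Near each stratum there is an explicit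
motion planner (`Sph.Plan.hasSec`): the entries, normalised to have a positive coordinate `i_l`, are
joined through the first basis vector, and the path is rotated according to a continuous choice
of the angles between the `u_l` and `u_0`.
-/

open scoped unitInterval

/-- The map `π_k : C([0,1],X) → X^k`, `γ ↦ (γ(0), γ(1/(k-1)), …, γ(1))`. -/
noncomputable def pik {X : Type*} [TopologicalSpace X] (k : ℕ) (γ : C(unitInterval, X)) :
    Fin k → X :=
  fun i => γ (Set.projIcc 0 1 zero_le_one ((i : ℝ) / ((k : ℝ) - 1)))

/-- The restriction of `π_k` over `S ⊆ X^k` admits a continuous section. -/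
def HasSec {X : Type*} [TopologicalSpace X] (k : ℕ) (S : Set (Fin k → X)) : Prop :=
  ∃ s : C(S, C(unitInterval, X)), ∀ u : S, pik k (s u) = (u : Fin k → X)

/-- The inclusion of `U` into `Z` is null-homotopic. -/
def NullHomotopicIncl {Z : Type*} [TopologicalSpace Z] (U : Set Z) : Prop :=
  ∃ z : Z, ContinuousMap.Homotopic ⟨Subtype.val, continuous_subtype_val⟩
    (ContinuousMap.const ↥U z)

/-- `X^k` can be covered by `r` open sets, each admitting a continuous section of `π_k`. -/
def TCCoverAt (X : Type*) [TopologicalSpace X] (k r : ℕ) : Prop :=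
  ∃ U : Fin r → Set (Fin k → X),
    (∀ i, IsOpen (U i)) ∧ (⋃ i, U i) = Set.univ ∧ ∀ i, HasSec k (U i)

/-- The higher (sequential) topological complexity `TC_k(X)`. -/
noncomputable def higherTC (X : Type*) [TopologicalSpace X] (k : ℕ) : ℕ :=
  sInf {r | TCCoverAt X k r}

/-- A Hurewicz fibration: homotopy lifting property with respect to every space. -/
def IsHurewiczFibration.{u} {E B : Type*} [TopologicalSpace E] [TopologicalSpace B]
    (p : C(E, B)) : Prop :=
  ∀ (Z : Type u) [TopologicalSpace Z] (f : C(Z, E)) (H : C(Z × unitInterval, B)),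
    (∀ z, H (z, 0) = p (f z)) →
    ∃ G : C(Z × unitInterval, E), (∀ z, G (z, 0) = f z) ∧ ∀ z t, p (G (z, t)) = H (z, t)

/-- The equivalence relation on `S^{2n+1} ⊆ ℂ^{n+1}` identifying points in the same
orbit of the group of `m`-th roots of unity acting by complex scalar multiplication. -/
noncomputable def lensSetoid (m n : ℕ) :
    Setoid (Metric.sphere (0 : EuclideanSpace ℂ (Fin (n + 1))) 1) where
  r x y := ∃ ζ : ℂˣ, ζ ^ m = 1 ∧
    (y : EuclideanSpace ℂ (Fin (n + 1))) = ζ • (x : EuclideanSpace ℂ (Fin (n + 1)))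
  iseqv := by
    constructor
    · exact fun x => ⟨1, one_pow m, (one_smul _ _).symm⟩
    · rintro x y ⟨ζ, hζ, h⟩
      exact ⟨ζ⁻¹, by rw [inv_pow, hζ, inv_one], by rw [h, inv_smul_smul]⟩
    · rintro x y z ⟨ζ₁, h₁, e₁⟩ ⟨ζ₂, h₂, e₂⟩
      exact ⟨ζ₂ * ζ₁, by rw [mul_pow, h₁, h₂, one_mul], by rw [e₂, e₁, smul_smul]⟩

/-- The lens space `L^{2n+1}_m`, the quotient of the unit sphere `S^{2n+1} ⊆ ℂ^{n+1}`
by the action of the `m`-th roots of unity, with the quotient topology. -/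
noncomputable def LensSpace (m n : ℕ) : Type :=
  Quotient (lensSetoid m n)

noncomputable instance (m n : ℕ) : TopologicalSpace (LensSpace m n) :=
  inferInstanceAs (TopologicalSpace (Quotient (lensSetoid m n)))

/-! ### Cochains on tuples of points and prism operators -/

/-- A cochain with integer values on finite tuples of points: a tuple with `d + 1` entries is an
ordered `d`-simplex, and all degrees are treated at once. -/
abbrev Coch (V : Type*) := List V → ℤ

namespace Coch

variable {V : Type*}

/-- The (augmented) coboundary, by recursion on the tuple. -/
def dFun : Coch V → Coch V
  | _, [] => 0
  | f, v :: L => f L - dFun (fun M => f (v :: M)) L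

/-- The cochain-level prism operator from the map `g` to the map `h`:
`f ↦ ∑ i, (-1) ^ i * f (g v₀, …, g vᵢ, h vᵢ, …, h v_d)`. -/
def prFun (g h : V → V) : Coch V → Coch V
  | _, [] => 0
  | f, v :: L => f (g v :: h v :: L.map h) - prFun g h (fun M => f (g v :: M)) L

theorem dFun_add (f f' : Coch V) (L : List V) : dFun (f + f') L = dFun f L + dFun f' L := by
  induction L generalizing f f' with
  | nil => simp [dFun]
  | cons v L ih =>
    have := ih (fun M => f (v :: M)) (fun M => f' (v :: M))
    simp only [dFun, Pi.add_apply]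
    change _ - dFun ((fun M => f (v :: M)) + (fun M => f' (v :: M))) L = _
    rw [this]; ring

theorem dFun_smul (c : ℤ) (f : Coch V) (L : List V) : dFun (c • f) L = c • dFun f L := by
  induction L generalizing f with
  | nil => simp [dFun]
  | cons v L ih =>
    have := ih (fun M => f (v :: M))
    simp only [dFun, Pi.smul_apply]
    change _ - dFun (c • (fun M => f (v :: M))) L = _
    rw [this, smul_sub]

theorem prFun_add (g h : V → V) (f f' : Coch V) (L : List V) :
    prFun g h (f + f') L = prFun g h f L + prFun g h f' L := by
  induction L generalizing f f' with
  | nil => simp [prFun]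
  | cons v L ih =>
    have := ih (fun M => f (g v :: M)) (fun M => f' (g v :: M))
    simp only [prFun, Pi.add_apply]
    change _ - prFun g h ((fun M => f (g v :: M)) + (fun M => f' (g v :: M))) L = _
    rw [this]; ring

theorem prFun_smul (g h : V → V) (c : ℤ) (f : Coch V) (L : List V) :
    prFun g h (c • f) L = c • prFun g h f L := by
  induction L generalizing f with
  | nil => simp [prFun]
  | cons v L ih =>
    have := ih (fun M => f (g v :: M))
    simp only [prFun, Pi.smul_apply]
    change _ - prFun g h (c • (fun M => f (g v :: M))) L = _
    rw [this, smul_sub]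

/-- The coboundary as a linear map. -/
def d : Coch V →ₗ[ℤ] Coch V where
  toFun := dFun
  map_add' f f' := funext (dFun_add f f')
  map_smul' c f := funext (dFun_smul c f)

/-- The prism operator as a linear map. -/
def pr (g h : V → V) : Coch V →ₗ[ℤ] Coch V where
  toFun := prFun g h
  map_add' f f' := funext (prFun_add g h f f')
  map_smul' c f := funext (prFun_smul g h c f)

/-- Pull-back of cochains along a map of points. -/
def pull (g : V → V) : Coch V →ₗ[ℤ] Coch V where
  toFun f L := f (L.map g)
  map_add' _ _ := rfl
  map_smul' _ _ := rfl

@[simp] theorem d_nil (f : Coch V) : d f [] = 0 := rfl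
theorem d_cons (f : Coch V) (v : V) (L : List V) :
    d f (v :: L) = f L - d (fun M => f (v :: M)) L := rfl
@[simp] theorem pr_nil (g h : V → V) (f : Coch V) : pr g h f [] = 0 := rfl
theorem pr_cons (g h : V → V) (f : Coch V) (v : V) (L : List V) :
    pr g h f (v :: L) = f (g v :: h v :: L.map h) - pr g h (fun M => f (g v :: M)) L := rfl
theorem pull_apply (g : V → V) (f : Coch V) (L : List V) : pull g f L = f (L.map g) := rfl

theorem pull_pull (g h : V → V) (f : Coch V) : pull g (pull h f) = pull (h ∘ g) f := by
  funext L; simp [pull_apply]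

@[simp] theorem pull_id (f : Coch V) : pull id f = f := by
  funext L; simp [pull_apply]

/-- The prism operator is a cochain homotopy from `g` to `h`. -/
theorem d_pr_add (g h : V → V) (f : Coch V) :
    d (pr g h f) + pr g h (d f) = pull h f - pull g f := by
  funext L
  simp only [Pi.add_apply, Pi.sub_apply, pull_apply]
  induction L generalizing f with
  | nil => simp
  | cons v L ih =>
    have e1 : (fun M => pr g h f (v :: M))
        = pull h (fun M => f (g v :: h v :: M)) - pr g h (fun M => f (g v :: M)) := by
      funext M; simp [pr_cons, pull_apply]
    have e2 : (fun M => d f (g v :: M))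
        = (f : Coch V) - d (fun M => f (g v :: M)) := by
      funext M; simp [d_cons]
    have dpull : ∀ (p : Coch V) (K : List V), d (pull h p) K = d p (K.map h) := by
      intro p K
      induction K generalizing p with
      | nil => simp
      | cons w K ihK =>
        rw [d_cons, List.map_cons, d_cons]
        exact congrArg₂ _ rfl (ihK (fun M => p (h w :: M)))
    rw [d_cons, pr_cons, e1, e2, map_sub, map_sub]
    simp only [Pi.sub_apply, dpull, d_cons, List.map_cons]
    have := ih (fun M => f (g v :: M))
    linarith

theorem d_pull (h : V → V) (f : Coch V) : d (pull h f) = pull h (d f) := by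
  funext K
  induction K generalizing f with
  | nil => simp [pull_apply]
  | cons w K ihK =>
    rw [d_cons, pull_apply h (d f), List.map_cons, d_cons]
    exact congrArg₂ _ rfl (ihK (fun M => f (h w :: M)))

theorem d_d (f : Coch V) : d (d f) = 0 := by
  funext L
  induction L generalizing f with
  | nil => rfl
  | cons v L ih =>
    have e2 : (fun M => d f (v :: M)) = (f : Coch V) - d (fun M => f (v :: M)) := by
      funext M; simp [d_cons]
    rw [d_cons, e2, map_sub, Pi.sub_apply, ih]; simp

theorem pr_pull (g h c g' h' : V → V) (hg : ∀ v, c (g v) = g' (c v)) (hh : ∀ v, c (h v) = h' (c v))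
    (f : Coch V) : pr g h (pull c f) = pull c (pr g' h' f) := by
  funext L
  induction L generalizing f with
  | nil => rfl
  | cons v L ih =>
    have := ih (fun M => f (g' (c v) :: M))
    simp only [pr_cons, pull_apply, List.map_cons] at *
    rw [← this, hg, hh]
    simp only [List.map_map, Function.comp_def, hh]
    congr 2

theorem pr_pull_comp (g h c : V → V) (f : Coch V) :
    pr (g ∘ c) (h ∘ c) f = pull c (pr g h f) := by
  funext L
  induction L generalizing f with
  | nil => rfl
  | cons v L ih =>
    have := ih (fun M => f (g (c v) :: M))
    simp only [pr_cons, pull_apply, List.map_cons] at *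
    rw [← this]
    simp [Function.comp_def]

/-- Iterating the prism of one map `g` gives zero: the two triangles of each square cancel. -/
theorem pr_pr (g : V → V) (f : Coch V) : pr id g (pr id g f) = 0 := by
  funext L
  induction L generalizing f with
  | nil => rfl
  | cons v L ih =>
    have e1 : (fun M => pr id g f (id v :: M))
        = pull g (fun M => f (v :: g v :: M)) - pr id g (fun M => f (v :: M)) := by
      funext M; simp [pr_cons, pull_apply]
    rw [pr_cons, e1, map_sub, Pi.sub_apply, ih,
      pr_pull id g g id g (fun _ => rfl) (fun _ => rfl)]
    simp [pr_cons, pull_apply]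

/-- Normalized cochains: they vanish on tuples with two equal adjacent entries. -/
def Norm (f : Coch V) : Prop := ∀ (A : List V) (v : V) (B : List V), f (A ++ v :: v :: B) = 0

theorem Norm.cons {f : Coch V} (hf : Norm f) (v : V) : Norm (fun M => f (v :: M)) :=
  fun A w B => hf (v :: A) w B

theorem Norm.add {f g : Coch V} (hf : Norm f) (hg : Norm g) : Norm (f + g) := fun A v B => by
  simp [hf A v B, hg A v B]

theorem Norm.sub {f g : Coch V} (hf : Norm f) (hg : Norm g) : Norm (f - g) := fun A v B => by
  simp [hf A v B, hg A v B]

theorem Norm.neg {f : Coch V} (hf : Norm f) : Norm (-f) := fun A v B => by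
  simp [hf A v B]

theorem Norm.sum {ι : Type*} {s : Finset ι} {f : ι → Coch V} (hf : ∀ i ∈ s, Norm (f i)) :
    Norm (∑ i ∈ s, f i) := fun A v B => by
  rw [Finset.sum_apply]
  exact Finset.sum_eq_zero fun i hi => hf i hi A v B

theorem Norm.pull {f : Coch V} (hf : Norm f) (g : V → V) : Norm (pull g f) := fun A v B => by
  simp [pull_apply, hf (A.map g) (g v) (B.map g)]

theorem Norm.pr {f : Coch V} (hf : Norm f) (g h : V → V) : Norm (pr g h f) := by
  intro A
  induction A generalizing f with
  | nil =>
    intro v B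
    have : (fun M => f (g v :: g v :: M)) = (0 : Coch V) := by
      funext M; exact hf [] (g v) M
    simp only [List.nil_append, pr_cons, List.map_cons]
    rw [this]
    have h1 := hf [g v] (h v) (B.map h)
    have h2 := hf [] (g v) (h v :: B.map h)
    simp only [List.nil_append, List.cons_append] at h1 h2
    simp [h1, h2]
  | cons a A ih =>
    intro v B
    have h1 := ih (hf.cons (g a)) v B
    have h2 := hf (g a :: h a :: A.map h) (h v) (B.map h)
    simp only [List.cons_append] at h2
    simp only [List.cons_append, pr_cons, h1, List.map_append, List.map_cons]
    simp [h2]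

/-- The prism of `g` annihilates normalized cochains pulled back along a map that does not
distinguish a point from its image under `g`. -/
theorem pr_pull_eq_zero {f : Coch V} (hf : Norm f) (g c : V → V) (hc : ∀ v, c (g v) = c v) :
    pr id g (pull c f) = 0 := by
  funext L
  induction L generalizing f with
  | nil => rfl
  | cons v L ih =>
    have := ih (hf.cons (c v))
    have h0 := hf [] (c v) (L.map c)
    simp only [List.nil_append, Pi.zero_apply] at h0 this
    rw [pr_cons]
    have e : (fun M => Coch.pull c f (id v :: M)) = Coch.pull c (fun M => f (c v :: M)) := rfl
    rw [e, this]
    simp only [pull_apply, List.map_cons, id, hc, List.map_map, Function.comp_def, h0]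
    simp

/-- The value of a prism only involves tuples formed from images of the given points. -/
theorem pr_eq_zero (g h : V → V) (f : Coch V) (L : List V)
    (hf : ∀ L' : List V, L' ≠ [] → (∀ x ∈ L', ∃ v ∈ L, x = g v ∨ x = h v) → f L' = 0) :
    pr g h f L = 0 := by
  induction L generalizing f with
  | nil => rfl
  | cons v L ih =>
    rw [pr_cons, ih, hf, sub_zero]
    · simp
    · intro x hx
      simp only [List.mem_cons, List.mem_map] at hx
      rcases hx with rfl | rfl | ⟨w, hw, rfl⟩
      · exact ⟨v, by simp, Or.inl rfl⟩
      · exact ⟨v, by simp, Or.inr rfl⟩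
      · exact ⟨w, by simp [hw], Or.inr rfl⟩
    · intro L' _ hL'
      refine hf _ (by simp) ?_
      intro x hx
      rcases List.mem_cons.1 hx with rfl | hx
      · exact ⟨v, by simp, Or.inl rfl⟩
      · obtain ⟨w, hw, h⟩ := hL' x hx
        exact ⟨w, by simp [hw], h⟩

end Coch

/-! ### Equivariant cells in a power of the sphere -/

/-- The moves from which the cells are built: a rotation step `g` whose `M`-th iterate `ζ`
generates an action of the cyclic group of order `m`, and, for each `j`, a discrete homotopy
`cone j 0, …, cone j M` from the identity to the constant map with value `pole j`. -/
structure CellMoves (S : Type*) (m M : ℕ) where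
  /-- the rotation step -/
  g : S → S
  /-- the cone homotopies -/
  cone : ℕ → ℕ → S → S
  /-- the apex of each cone -/
  pole : ℕ → S
  iter : g^[M * m] = id
  cone_zero : ∀ j, cone j 0 = id
  cone_last : ∀ j z, cone j M z = pole j

namespace CellMoves

open Coch

variable {S : Type*} {m M k : ℕ} (D : CellMoves S m M)

/-- The generator of the cyclic group action. -/
def ζ : S → S := D.g^[M]

theorem ζ_iter : D.ζ^[m] = id := by
  rw [ζ, ← Function.iterate_mul, D.iter]

/-- Apply a map to the coordinate `l` only. -/
def onC (l : Fin k) (h : S → S) (v : Fin k → S) : Fin k → S := Function.update v l (h (v l))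

theorem onC_id (l : Fin k) : onC l (id : S → S) = id := by
  funext v; simp [onC]

theorem onC_comp (l : Fin k) (h h' : S → S) : onC l h ∘ onC l h' = onC l (h ∘ h') := by
  funext v; simp [onC]

theorem onC_comm {l l' : Fin k} (hl : l ≠ l') (h h' : S → S) (v : Fin k → S) :
    onC l h (onC l' h' v) = onC l' h' (onC l h v) := by
  unfold onC
  rw [Function.update_of_ne hl, Function.update_of_ne hl.symm, Function.update_comm hl]

theorem onC_iter (l : Fin k) (h : S → S) (t : ℕ) : (onC l h)^[t] = onC l h^[t] := by
  induction t with
  | zero => simp [onC_id]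
  | succ t ih => rw [Function.iterate_succ, ih, onC_comp, Function.iterate_succ]

/-- Prism along the rotation of the coordinate `l`. -/
def PR (l : Fin k) : Coch (Fin k → S) →ₗ[ℤ] Coch (Fin k → S) :=
  ∑ t ∈ Finset.range M, pull (onC l D.g^[t]) ∘ₗ pr id (onC l D.g)

/-- Prism along the cone homotopy `j` of the coordinate `l`. -/
def PC (l : Fin k) (j : ℕ) : Coch (Fin k → S) →ₗ[ℤ] Coch (Fin k → S) :=
  ∑ t ∈ Finset.range M, pr (onC l (D.cone j t)) (onC l (D.cone j (t + 1)))

/-- The action of `ζ` on the coordinate `l`. -/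
def Z (l : Fin k) : Coch (Fin k → S) →ₗ[ℤ] Coch (Fin k → S) := pull (onC l D.ζ)

/-- The norm element of the cyclic group acting on the coordinate `l`. -/
def Nm (l : Fin k) : Coch (Fin k → S) →ₗ[ℤ] Coch (Fin k → S) :=
  ∑ t ∈ Finset.range m, pull (onC l D.ζ^[t])

/-- The differentials of the periodic resolution: `ζ - 1` in odd degrees, the norm in even ones. -/
def T (l : Fin k) (i : ℕ) : Coch (Fin k → S) →ₗ[ℤ] Coch (Fin k → S) :=
  if Odd i then D.Z l - LinearMap.id else D.Nm l

/-- Dual of attaching an `i`-cell of the periodic resolution in the coordinate `l`. -/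
def Q (l : Fin k) : ℕ → (Coch (Fin k → S) →ₗ[ℤ] Coch (Fin k → S))
  | 0 => LinearMap.id
  | i + 1 => if Even i then Q l i ∘ₗ D.PR l else -(Q l i ∘ₗ D.Nm l ∘ₗ D.PC l (i / 2))

theorem PR_apply (l : Fin k) (f : Coch (Fin k → S)) :
    D.PR l f = ∑ t ∈ Finset.range M, pull (onC l D.g^[t]) (pr id (onC l D.g) f) := by
  simp [PR, LinearMap.sum_apply]

theorem PC_apply (l : Fin k) (j : ℕ) (f : Coch (Fin k → S)) :
    D.PC l j f = ∑ t ∈ Finset.range M,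
      pr (onC l (D.cone j t)) (onC l (D.cone j (t + 1))) f := by
  simp [PC, LinearMap.sum_apply]

theorem Nm_apply (l : Fin k) (f : Coch (Fin k → S)) :
    D.Nm l f = ∑ t ∈ Finset.range m, pull (onC l D.ζ^[t]) f := by
  simp [Nm, LinearMap.sum_apply]

theorem PR_apply' (l : Fin k) (f : Coch (Fin k → S)) :
    D.PR l f = ∑ t ∈ Finset.range M,
      pr (onC l D.g^[t]) (onC l D.g^[t + 1]) f := by
  rw [PR_apply]
  refine Finset.sum_congr rfl fun t _ => ?_
  rw [← pr_pull_comp]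
  congr 1
  rw [onC_comp, ← Function.iterate_succ']
  rfl

theorem d_PR (l : Fin k) (f : Coch (Fin k → S)) :
    D.PR l (d f) = -d (D.PR l f) + (D.Z l f - f) := by
  have h : d (D.PR l f) + D.PR l (d f) = D.Z l f - f := by
    rw [PR_apply', PR_apply', map_sum, ← Finset.sum_add_distrib]
    simp only [d_pr_add]
    rw [Finset.sum_range_sub (fun t => pull (onC l D.g^[t]) f)]
    simp [Z, ζ, onC_id]
  rw [← h]; abel

theorem d_PC (l : Fin k) (j : ℕ) (f : Coch (Fin k → S)) :
    D.PC l j (d f) = -d (D.PC l j f) + (pull (onC l fun _ => D.pole j) f - f) := by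
  have h : d (D.PC l j f) + D.PC l j (d f) = pull (onC l fun _ => D.pole j) f - f := by
    rw [PC_apply, PC_apply, map_sum, ← Finset.sum_add_distrib]
    simp only [d_pr_add]
    rw [Finset.sum_range_sub (fun t => pull (onC l (D.cone j t)) f)]
    rw [D.cone_zero, onC_id, pull_id, show D.cone j M = fun _ => D.pole j from
      funext (D.cone_last j)]
  rw [← h]; abel

theorem pr_pull_onC (l : Fin k) (t : ℕ) (f : Coch (Fin k → S)) :
    pr id (onC l D.g) (pull (onC l D.g^[t]) f) = pull (onC l D.g^[t]) (pr id (onC l D.g) f) := by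
  refine pr_pull id (onC l D.g) (onC l D.g^[t]) id (onC l D.g) (fun _ => rfl) (fun v => ?_) f
  have := congrFun (onC_comp (k := k) l D.g^[t] D.g) v
  have h2 := congrFun (onC_comp (k := k) l D.g D.g^[t]) v
  simp only [Function.comp_apply] at this h2
  rw [this, h2, ← Function.iterate_succ, ← Function.iterate_succ']

theorem PR_PR (l : Fin k) (f : Coch (Fin k → S)) : D.PR l (D.PR l f) = 0 := by
  rw [PR_apply, PR_apply, map_sum]
  simp only [pr_pull_onC, pr_pr, map_zero, Finset.sum_const_zero]

theorem PR_pull_ζ (l : Fin k) (s : ℕ) (f : Coch (Fin k → S)) :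
    D.PR l (pull (onC l D.ζ^[s]) f) = pull (onC l D.ζ^[s]) (D.PR l f) := by
  rw [PR_apply, PR_apply, map_sum]
  refine Finset.sum_congr rfl fun t _ => ?_
  rw [ζ, ← Function.iterate_mul, pr_pull_onC, pull_pull, pull_pull, onC_comp, onC_comp,
    ← Function.iterate_add, ← Function.iterate_add, add_comm]

theorem PR_Nm (l : Fin k) (f : Coch (Fin k → S)) : D.PR l (D.Nm l f) = D.Nm l (D.PR l f) := by
  rw [Nm_apply, Nm_apply, map_sum]
  exact Finset.sum_congr rfl fun t _ => D.PR_pull_ζ l t f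

theorem PR_pull_pole (l : Fin k) (p : S) {f : Coch (Fin k → S)} (hf : Norm f) :
    D.PR l (pull (onC l fun _ => p) f) = 0 := by
  rw [PR_apply]
  refine Finset.sum_eq_zero fun t _ => ?_
  rw [pr_pull_eq_zero hf, map_zero]
  intro v; simp [onC]

theorem Z_Nm (l : Fin k) (f : Coch (Fin k → S)) : D.Z l (D.Nm l f) = D.Nm l f := by
  rw [Nm_apply, map_sum]
  have h : ∀ t, D.Z l (pull (onC l D.ζ^[t]) f) = pull (onC l D.ζ^[t + 1]) f := fun t => by
    rw [Z, pull_pull, onC_comp, Function.iterate_succ]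
  simp only [h]
  have := Finset.sum_range_sub (fun t => pull (onC l D.ζ^[t]) f) m
  rw [D.ζ_iter, Finset.sum_sub_distrib, Function.iterate_zero, sub_self, sub_eq_zero] at this
  exact this

theorem d_Nm (l : Fin k) (f : Coch (Fin k → S)) : d (D.Nm l f) = D.Nm l (d f) := by
  rw [Nm_apply, Nm_apply, map_sum]
  exact Finset.sum_congr rfl fun t _ => d_pull _ _

theorem Norm_PR (l : Fin k) {f : Coch (Fin k → S)} (hf : Norm f) : Norm (D.PR l f) := by
  rw [PR_apply]; exact Norm.sum fun t _ => (hf.pr _ _).pull _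

theorem Norm_PC (l : Fin k) (j : ℕ) {f : Coch (Fin k → S)} (hf : Norm f) :
    Norm (D.PC l j f) := by
  rw [PC_apply]; exact Norm.sum fun t _ => hf.pr _ _

theorem Norm_Nm (l : Fin k) {f : Coch (Fin k → S)} (hf : Norm f) : Norm (D.Nm l f) := by
  rw [Nm_apply]; exact Norm.sum fun t _ => hf.pull _

theorem Norm_Q (l : Fin k) (i : ℕ) {f : Coch (Fin k → S)} (hf : Norm f) : Norm (D.Q l i f) := by
  induction i generalizing f with
  | zero => exact hf
  | succ i ih =>
    rw [Q]
    split_ifs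
    · exact ih (D.Norm_PR l hf)
    · exact (ih (D.Norm_Nm l (D.Norm_PC l _ hf))).neg

theorem Q_succ_even (l : Fin k) {i : ℕ} (hi : Even i) (f : Coch (Fin k → S)) :
    D.Q l (i + 1) f = D.Q l i (D.PR l f) := by
  rw [Q, if_pos hi]; rfl

theorem Q_succ_odd (l : Fin k) {i : ℕ} (hi : ¬ Even i) (f : Coch (Fin k → S)) :
    D.Q l (i + 1) f = -D.Q l i (D.Nm l (D.PC l (i / 2) f)) := by
  rw [Q, if_neg hi]; rfl

/-- The cells of one coordinate realize the periodic resolution of the cyclic group. -/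
theorem Q_d (l : Fin k) (i : ℕ) {f : Coch (Fin k → S)} (hf : Norm f) :
    D.Q l (i + 1) (d f) = (-1) ^ (i + 1) • d (D.Q l (i + 1) f) + D.Q l i (D.T l (i + 1) f) := by
  induction i generalizing f with
  | zero =>
    rw [Q_succ_even _ _ (by simp), Q_succ_even _ _ (by simp)]
    simp [Q, d_PR, T]
  | succ i ih =>
    by_cases hi : Even i
    · have ho : ¬ Even (i + 1) := by simpa [Nat.even_add_one] using hi
      have hoo : Odd (i + 1) := by simpa using ho
      have hT : D.T l (i + 1 + 1) f = D.Nm l f := by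
        rw [T, if_neg]; simpa [Nat.even_add_one] using hi
      have hT' : ∀ f' : Coch (Fin k → S), D.T l (i + 1) f' = D.Z l f' - f' := fun f' => by
        rw [T, if_pos hoo]; rfl
      rw [Q_succ_odd _ _ ho, Q_succ_odd _ _ ho, hT, d_PC, map_add, map_add, map_neg, map_neg,
        map_sub, map_sub, ← d_Nm, ih (D.Norm_Nm l (D.Norm_PC l _ hf)), hT', Z_Nm, sub_self,
        map_zero, Q_succ_even _ _ hi (D.Nm l (pull _ f)), PR_Nm, D.PR_pull_pole l _ hf]
      rw [hoo.neg_one_pow, show ((-1 : ℤ)) ^ (i + 1 + 1) = 1 from hoo.add_one.neg_one_pow]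
      simp [add_comm]
    · have he : Even (i + 1) := by simpa [Nat.even_add_one] using hi
      have ho : ¬ Even (i + 1 + 1) := by simpa [Nat.even_add_one] using hi
      have hT : D.T l (i + 1 + 1) f = D.Z l f - f := by
        rw [T, if_pos (by simpa using ho)]; rfl
      have hT' : ∀ f' : Coch (Fin k → S), D.T l (i + 1) f' = D.Nm l f' := fun f' => by
        rw [T, if_neg (by simpa using he)]
      obtain ⟨j, rfl⟩ : ∃ j, i = j + 1 := ⟨i - 1, by
        rcases i with _ | i
        · simp at hi
        · simp⟩
      have hj : Even j := by simpa [Nat.even_add_one] using hi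
      rw [Q_succ_even _ _ he, Q_succ_even _ _ he, hT, d_PR, map_add, map_neg,
        ih (D.Norm_PR l hf), hT', Q_succ_even _ _ hj (D.Nm l _), PR_Nm, PR_PR]
      rw [he.neg_one_pow, show ((-1 : ℤ)) ^ (j + 1 + 1 + 1) = -1 from he.add_one.neg_one_pow]
      simp

theorem Q_pull_comm (l l' : Fin k) (hl : l ≠ l') (h : S → S) (i : ℕ) (f : Coch (Fin k → S)) :
    D.Q l i (pull (onC l' h) f) = pull (onC l' h) (D.Q l i f) := by
  have hpr : ∀ (p q : S → S) (f : Coch (Fin k → S)), pr (onC l p) (onC l q) (pull (onC l' h) f)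
      = pull (onC l' h) (pr (onC l p) (onC l q) f) := fun p q f =>
    pr_pull _ _ _ _ _ (fun v => onC_comm hl.symm _ _ v) (fun v => onC_comm hl.symm _ _ v) f
  have hpp : ∀ (p : S → S) (f : Coch (Fin k → S)), pull (onC l p) (pull (onC l' h) f)
      = pull (onC l' h) (pull (onC l p) f) := fun p f => by
    have : onC l' h ∘ onC l p = onC l p ∘ onC l' h := funext fun v => onC_comm hl.symm _ _ v
    rw [pull_pull, pull_pull, this]
  induction i generalizing f with
  | zero => rfl
  | succ i ih =>
    by_cases hi : Even i
    · rw [Q_succ_even _ _ hi, Q_succ_even _ _ hi, ← ih, PR_apply', PR_apply', map_sum (pull (onC l' h))]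
      simp only [hpr]
    · rw [Q_succ_odd _ _ hi, Q_succ_odd _ _ hi, map_neg, ← ih, PC_apply, PC_apply, Nm_apply,
        Nm_apply, map_sum]
      simp only [hpr, ← map_sum, hpp]

theorem Q_nil (l : Fin k) (i : ℕ) {f : Coch (Fin k → S)} (hf : f [] = 0) :
    D.Q l i f [] = 0 := by
  have hPR : ∀ f : Coch (Fin k → S), D.PR l f [] = 0 := fun f => by
    simp [PR_apply, Finset.sum_apply, pull_apply]
  have hPC : ∀ j (f : Coch (Fin k → S)), D.PC l j f [] = 0 := fun j f => by
    simp [PC_apply, Finset.sum_apply]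
  induction i generalizing f with
  | zero => exact hf
  | succ i ih =>
    by_cases hi : Even i
    · rw [Q_succ_even _ _ hi]; exact ih (hPR f)
    · rw [Q_succ_odd _ _ hi, Pi.neg_apply, ih, neg_zero]
      simp [Nm_apply, Finset.sum_apply, pull_apply, hPC]

theorem Q_T_comm (l l' : Fin k) (hl : l ≠ l') (i j : ℕ) (f : Coch (Fin k → S)) :
    D.Q l i (D.T l' j f) = D.T l' j (D.Q l i f) := by
  unfold T
  split_ifs
  · simp [Z, Q_pull_comm _ _ _ hl]
  · rw [Nm_apply, Nm_apply, map_sum]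
    exact Finset.sum_congr rfl fun t _ => D.Q_pull_comm _ _ hl _ _ _

/-- Evaluation of cochains on the product cell with multidegree `n`, where `ls` lists the
coordinates and `b` is the base point. -/
def ev (b : Fin k → S) : List (Fin k) → (Fin k → ℕ) → (Coch (Fin k → S) →ₗ[ℤ] ℤ)
  | [], _ => LinearMap.proj [b]
  | l :: ls, n => ev b ls n ∘ₗ D.Q l (n l)

theorem ev_cons (b : Fin k → S) (l : Fin k) (ls : List (Fin k)) (n : Fin k → ℕ)
    (f : Coch (Fin k → S)) : D.ev b (l :: ls) n f = D.ev b ls n (D.Q l (n l) f) := rfl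

theorem ev_update (b : Fin k → S) (l : Fin k) (ls : List (Fin k)) (hl : l ∉ ls) (n : Fin k → ℕ)
    (x : ℕ) : D.ev b ls (Function.update n l x) = D.ev b ls n := by
  induction ls with
  | nil => rfl
  | cons a ls ih =>
    simp only [List.mem_cons, not_or] at hl
    rw [ev, ev, ih hl.2, Function.update_of_ne (Ne.symm hl.1)]

/-- The boundary of a product cell. The sign of a term is positive as soon as all the other
coordinates have even degree. -/
theorem ev_d (b : Fin k → S) (ls : List (Fin k)) (hls : ls.Nodup) (n : Fin k → ℕ) :
    ∃ s : Fin k → ℤ, (∀ l, s l = 1 ∨ s l = -1) ∧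
      (∀ l, (∀ l', l' ≠ l → Even (n l')) → s l = 1) ∧
      ∀ f : Coch (Fin k → S), Norm f → f [] = 0 → D.ev b ls n (d f) =
        ∑ l ∈ ls.toFinset, if n l = 0 then 0 else
          s l * D.ev b ls (Function.update n l (n l - 1)) (D.T l (n l) f) := by
  induction ls with
  | nil =>
    refine ⟨fun _ => 1, fun _ => Or.inl rfl, fun _ _ => rfl, fun f _ hf0 => ?_⟩
    simp [ev, d_cons, hf0]
  | cons a ls ih =>
    obtain ⟨ha, hls'⟩ := List.nodup_cons.1 hls
    obtain ⟨s, hs1, hs2, hs3⟩ := ih hls'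
    refine ⟨fun l => if l = a then 1 else (-1) ^ n a * s l, fun l => ?_, fun l hl => ?_,
      fun f hf hf0 => ?_⟩
    · dsimp only
      split_ifs
      · exact Or.inl rfl
      · rcases neg_one_pow_eq_or ℤ (n a) with h | h <;> rcases hs1 l with h' | h' <;>
          simp [h, h']
    · dsimp only
      split_ifs with h
      · rfl
      · rw [hs2 l hl, (hl a (Ne.symm h)).neg_one_pow, one_mul]
    · have key : D.Q a (n a) (d f) = (-1) ^ (n a) • d (D.Q a (n a) f) +
          (if n a = 0 then 0 else D.Q a (n a - 1) (D.T a (n a) f)) := by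
        rcases h : n a with _ | i
        · simp [Q]
        · simpa using D.Q_d a i hf
      rw [ev_cons, key, map_add, List.toFinset_cons, Finset.sum_insert (by simpa using ha),
        add_comm, map_smul, hs3 _ (D.Norm_Q _ _ hf) (D.Q_nil _ _ hf0)]
      congr 1
      · split_ifs with h
        · simp
        · rw [ev_cons, ev_update _ _ _ _ ha]; simp
      · rw [Finset.smul_sum]
        refine Finset.sum_congr rfl fun l hl => ?_
        have hla : l ≠ a := by rintro rfl; exact ha (by simpa using hl)
        split_ifs with h
        · simp
        · rw [ev_cons, Function.update_of_ne hla.symm, Q_T_comm _ _ _ hla.symm, smul_eq_mul]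
          simp [hla, mul_assoc]

end CellMoves

/-! ### Cup products with the classes of degree one and two -/

namespace Coch

variable {V : Type*}

/-- Cup product (on the left) with a cochain of degree one. -/
def cup (x : V → V → ℤ) (c : Coch V) : Coch V
  | v₀ :: v₁ :: L => x v₀ v₁ * c (v₁ :: L)
  | _ => 0

/-- Cup product (on the left) with a cochain of degree two. -/
def cup₂ (y : V → V → V → ℤ) (c : Coch V) : Coch V
  | v₀ :: v₁ :: v₂ :: L => y v₀ v₁ v₂ * c (v₂ :: L)
  | _ => 0

/-- Multiplication by a function of the first vertex. -/
def lead (a : V → ℤ) (c : Coch V) : Coch V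
  | v :: L => a v * c (v :: L)
  | _ => 0

/-- The unit cochain, of degree zero. -/
def unit : Coch V
  | [_] => 1
  | _ => 0

theorem d_const_mul (t : ℤ) (f : Coch V) (L : List V) : d (fun M => t * f M) L = t * d f L := by
  have : (fun M => t * f M) = t • f := by funext M; simp
  rw [this, map_smul]; simp

theorem d_zero_fun (L : List V) : d (fun _ => (0 : ℤ) : Coch V) L = 0 := by
  have : (fun _ => (0 : ℤ) : Coch V) = 0 := rfl
  rw [this, map_zero]; rfl

theorem d_lead (a : V → ℤ) (c : Coch V) (v₀ v₁ : V) (L : List V) :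
    d (lead a c) (v₀ :: v₁ :: L) =
      (a v₁ - a v₀) * c (v₁ :: L) + a v₀ * d c (v₀ :: v₁ :: L) := by
  rw [d_cons, d_cons c]
  have : (fun M => lead a c (v₀ :: M)) = fun M => a v₀ * c (v₀ :: M) := rfl
  rw [this, d_const_mul (a v₀) (fun M => c (v₀ :: M))]
  simp only [lead]; ring

theorem d_cup (x : V → V → ℤ) (c : Coch V) (v₀ v₁ : V) (L : List V) :
    d (cup x c) (v₀ :: v₁ :: L) =
      cup x c (v₁ :: L) - cup x c (v₀ :: L) + x v₀ v₁ * (c L - d c (v₁ :: L)) := by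
  rw [d_cons, d_cons, d_cons c]
  have : (fun M => cup x c (v₀ :: v₁ :: M)) = fun M => x v₀ v₁ * c (v₁ :: M) := rfl
  rw [this, d_const_mul (x v₀ v₁) (fun M => c (v₁ :: M))]
  ring

theorem d_unit : d (unit : Coch V) = 0 := by
  funext L
  rcases L with _ | ⟨v, _ | ⟨w, L⟩⟩
  · rfl
  · simp [d_cons, unit]
  · rw [d_cons]
    have : (fun M => unit (v :: M) : Coch V) = fun M => if M = [] then 1 else 0 := by
      funext M; rcases M with _ | ⟨x, M⟩ <;> simp [unit]
    rw [this, d_cons]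
    have h2 : (fun M => if w :: M = [] then (1 : ℤ) else 0) = fun _ : List V => 0 := by
      funext M; simp
    rw [h2, d_zero_fun]
    rcases L with _ | ⟨x, L⟩ <;> simp [unit]

theorem pr_unit (g h : V → V) : pr g h (unit : Coch V) = 0 := by
  funext L
  rcases L with _ | ⟨v, L⟩
  · rfl
  · rw [pr_cons]
    have h1 : ∀ L, pr g h (fun M => unit (g v :: M)) L = 0 := by
      intro L
      apply pr_eq_zero
      intro L' hL' _
      rcases L' with _ | ⟨x, L'⟩
      · exact absurd rfl hL'
      · rfl
    rw [h1]; rfl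

theorem Norm_cup {x : V → V → ℤ} (hx : ∀ v, x v v = 0) {c : Coch V} (hc : Norm c) :
    Norm (cup x c) := by
  intro A v B
  rcases A with _ | ⟨a, _ | ⟨a', A⟩⟩
  · simp [cup, hx]
  · have := hc [] v B
    simp only [List.nil_append] at this
    simp [cup, this]
  · have := hc (a' :: A) v B
    simp only [List.cons_append] at this
    simp [cup, this]

theorem Norm_cup₂ {y : V → V → V → ℤ} (hx : ∀ v w, y v v w = 0) (hx' : ∀ v w, y v w w = 0)
    {c : Coch V} (hc : Norm c) : Norm (cup₂ y c) := by
  intro A v B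
  rcases A with _ | ⟨a, _ | ⟨a', _ | ⟨a'', A⟩⟩⟩
  · rcases B with _ | ⟨b, B⟩ <;> simp [cup₂, hx]
  · simp [cup₂, hx']
  · have := hc [] v B
    simp only [List.nil_append] at this
    simp [cup₂, this]
  · have := hc (a'' :: A) v B
    simp only [List.cons_append] at this
    simp [cup₂, this]

theorem Norm_lead (a : V → ℤ) {c : Coch V} (hc : Norm c) : Norm (lead a c) := by
  intro A v B
  rcases A with _ | ⟨a, A⟩
  · have := hc [] v B
    simp only [List.nil_append] at this
    simp [lead, this]
  · have := hc (a :: A) v B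
    simp only [List.cons_append] at this
    simp [lead, this]

theorem Norm_unit : Norm (unit : Coch V) := by
  intro A v B
  rcases A with _ | ⟨a, A⟩
  · rfl
  · rcases A with _ | ⟨a', A⟩ <;> rfl

variable {m : ℕ}

/-- The representative in `ℤ` of the difference of a function with values in `ZMod m`. -/
def xx (a : V → ZMod m) (v₀ v₁ : V) : ℤ := ((a v₁ - a v₀ : ZMod m).cast : ℤ)

/-- A lift to `ℤ` of the cocycle `xx a` mod `m`, built with the help of a second function `a'` in
such a way that its coboundary vanishes as soon as `a` or `a'` is constant. -/
def lam (a a' : V → ZMod m) (v₀ v₁ : V) : ℤ :=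
  ((a' v₁ - a v₀ : ZMod m).cast : ℤ) - ((a' v₁ - a v₁ : ZMod m).cast : ℤ)

/-- The coboundary of `lam a b`. -/
def dlam (a b : V → ZMod m) (v₀ v₁ v₂ : V) : ℤ :=
  lam a b v₁ v₂ - lam a b v₀ v₂ + lam a b v₀ v₁

/-- A representative of the Bockstein of the class of `xx a`. -/
def yy (a a' : V → ZMod m) (v₀ v₁ v₂ : V) : ℤ := dlam a a' v₀ v₁ v₂ / m

theorem cast_xx (a : V → ZMod m) (v₀ v₁ : V) : (xx a v₀ v₁ : ZMod m) = a v₁ - a v₀ := by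
  simp [xx]

theorem cast_lam (a a' : V → ZMod m) (v₀ v₁ : V) :
    (lam a a' v₀ v₁ : ZMod m) = a v₁ - a v₀ := by
  simp [lam]

theorem yy_mul (a a' : V → ZMod m) (v₀ v₁ v₂ : V) :
    (m : ℤ) * yy a a' v₀ v₁ v₂ = dlam a a' v₀ v₁ v₂ := by
  refine Int.mul_ediv_cancel' ?_
  rw [← ZMod.intCast_zmod_eq_zero_iff_dvd]
  simp [dlam, cast_lam]

theorem lam_self (a a' : V → ZMod m) (v : V) : lam a a' v v = 0 := by simp [lam]

theorem xx_self (a : V → ZMod m) (v : V) : xx a v v = 0 := by simp [xx]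

theorem yy_left (a a' : V → ZMod m) (v w : V) : yy a a' v v w = 0 := by
  simp [yy, dlam, lam_self]

theorem yy_right (a a' : V → ZMod m) (v w : V) : yy a a' v w w = 0 := by
  simp [yy, dlam, lam_self]

theorem xx_shift {a : V → ZMod m} {e : V → V} {t : ZMod m} (h : ∀ v, a (e v) = a v + t) (v w : V) :
    xx a (e v) (e w) = xx a v w := by
  simp [xx, h]

theorem lam_shift {a a' : V → ZMod m} {e : V → V} {t : ZMod m} (h : ∀ v, a (e v) = a v + t)
    (h' : ∀ v, a' (e v) = a' v + t) (v w : V) : lam a a' (e v) (e w) = lam a a' v w := by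
  simp [lam, h, h']

theorem yy_shift {a a' : V → ZMod m} {e : V → V} {t : ZMod m} (h : ∀ v, a (e v) = a v + t)
    (h' : ∀ v, a' (e v) = a' v + t) (v w u : V) :
    yy a a' (e v) (e w) (e u) = yy a a' v w u := by
  simp [yy, dlam, lam_shift h h']

theorem pull_cup {x : V → V → ℤ} {e : V → V} (hx : ∀ v w, x (e v) (e w) = x v w) {c : Coch V}
    (hc : pull e c = c) : pull e (cup x c) = cup x c := by
  funext L
  rcases L with _ | ⟨v, _ | ⟨w, L⟩⟩
  · rfl
  · rfl
  · have := congrFun hc (w :: L)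
    simp only [pull_apply, List.map_cons] at this
    simp [pull_apply, cup, hx, this]

theorem pull_cup₂ {y : V → V → V → ℤ} {e : V → V}
    (hx : ∀ v w u, y (e v) (e w) (e u) = y v w u) {c : Coch V}
    (hc : pull e c = c) : pull e (cup₂ y c) = cup₂ y c := by
  funext L
  rcases L with _ | ⟨v, _ | ⟨w, _ | ⟨u, L⟩⟩⟩
  · rfl
  · rfl
  · rfl
  · have := congrFun hc (u :: L)
    simp only [pull_apply, List.map_cons] at this
    simp [pull_apply, cup₂, hx, this]

theorem pull_unit (e : V → V) : pull e (unit : Coch V) = unit := by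
  funext L
  rcases L with _ | ⟨v, _ | ⟨w, L⟩⟩ <;> rfl

theorem d_cup_lam (a a' : V → ZMod m) {c : Coch V} (h0 : c [] = 0) (hd : d c = 0) :
    d (cup (lam a a') c) = (m : ℤ) • cup₂ (yy a a') c := by
  funext L
  rcases L with _ | ⟨v, _ | ⟨w, L⟩⟩
  · simp [cup₂]
  · simp [d_cons, cup, cup₂]
  · rw [d_cup, hd]
    rcases L with _ | ⟨u, L⟩
    · simp [cup, cup₂, h0]
    · simp only [cup, cup₂, Pi.smul_apply, smul_eq_mul, Pi.zero_apply, ← mul_assoc, yy_mul, dlam]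
      ring

theorem d_cup_yy [NeZero m] (a a' : V → ZMod m) {c : Coch V} (h0 : c [] = 0) (hd : d c = 0) :
    d (cup₂ (yy a a') c) = 0 := by
  have h := congrArg d (d_cup_lam a a' h0 hd)
  rw [d_d, map_smul] at h
  exact (smul_eq_zero.1 h.symm).resolve_left (by exact_mod_cast NeZero.ne m)

theorem d_cup_xx (a : V → ZMod m) {c : Coch V} (h0 : c [] = 0)
    (hd : ∀ L, ((d c L : ℤ) : ZMod m) = 0) (L : List V) :
    ((d (cup (xx a) c) L : ℤ) : ZMod m) = 0 := by
  rcases L with _ | ⟨v, _ | ⟨w, L⟩⟩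
  · simp
  · simp [d_cons, cup]
  · rw [d_cup]
    rcases L with _ | ⟨u, L⟩
    · have := hd [w]
      simp [cup, h0, this]
    · have := hd (w :: u :: L)
      simp only [cup, Int.cast_add, Int.cast_sub, Int.cast_mul, cast_xx, this]
      ring

/-- The cocycles considered: normalized, zero on the empty tuple, invariant under the action. -/
structure Good {ι : Type*} (e : ι → V → V) (c : Coch V) : Prop where
  norm : Norm c
  nil : c [] = 0
  inv : ∀ i, pull (e i) c = c

end Coch

/-! ### Evaluation of products of classes on product cells -/

namespace CellMoves

open Coch

variable {S : Type*} {m M k : ℕ} (D : CellMoves S m M) (b : Fin k → S)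

/-- Lower the multidegree by one in the direction `l`. -/
def low (J : Fin k → ℕ) (l : Fin k) : Fin k → ℕ := Function.update J l (J l - 1)

theorem low_self (J : Fin k → ℕ) (l : Fin k) : low J l l = J l - 1 := by simp [low]

theorem low_ne (J : Fin k → ℕ) {l l' : Fin k} (h : l' ≠ l) : low J l l' = J l' := by
  simp [low, h]

/-- Evaluation modulo `m` on the product cell of multidegree `J`. -/
def E (J : Fin k → ℕ) (c : Coch (Fin k → S)) : ZMod m :=
  ((D.ev b (List.finRange k) J c : ℤ) : ZMod m)

theorem E_congr (J : Fin k → ℕ) {c c' : Coch (Fin k → S)}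
    (h : ∀ L, (c L : ZMod m) = (c' L : ZMod m)) : D.E b J c = D.E b J c' := by
  have : ∀ L, ∃ q : ℤ, c L - c' L = m * q := fun L => by
    have : ((c L - c' L : ℤ) : ZMod m) = 0 := by push_cast; rw [h, sub_self]
    exact (ZMod.intCast_zmod_eq_zero_iff_dvd _ _).1 this
  choose q hq using this
  have e : c = c' + (m : ℤ) • (q : Coch (Fin k → S)) := by
    funext L; simp [← hq L]
  rw [E, E, e, map_add, map_smul]
  simp

theorem E_mul (J : Fin k → ℕ) (c : Coch (Fin k → S)) (t : ℤ) :
    D.E b J (t • c) = t * D.E b J c := by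
  rw [E, map_smul, smul_eq_mul, Int.cast_mul, E]

theorem pull_iter {c : Coch (Fin k → S)} {e : (Fin k → S) → (Fin k → S)} (h : pull e c = c)
    (t : ℕ) : pull e^[t] c = c := by
  induction t with
  | zero => simp
  | succ t ih => rw [Function.iterate_succ, ← pull_pull, ih, h]

theorem pull_ζ_iter {c : Coch (Fin k → S)} (h : ∀ l, pull (onC l D.ζ) c = c) (l : Fin k) (t : ℕ) :
    pull (onC l D.ζ^[t]) c = c := by
  rw [← onC_iter]; exact pull_iter (h l) t

/-- The boundary formula for `ev`, modulo `m`. -/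
theorem E_d (J : Fin k → ℕ) :
    ∃ s : Fin k → ℤ, (∀ l, s l = 1 ∨ s l = -1) ∧
      (∀ l, (∀ l', l' ≠ l → Even (J l')) → s l = 1) ∧
      ∀ f : Coch (Fin k → S), Norm f → f [] = 0 → D.ev b (List.finRange k) J (d f) =
        ∑ l, if J l = 0 then 0 else
          s l * D.ev b (List.finRange k) (low J l) (D.T l (J l) f) := by
  obtain ⟨s, h1, h2, h3⟩ := D.ev_d b (List.finRange k) (List.nodup_finRange k) J
  refine ⟨s, h1, h2, fun f hf hf0 => ?_⟩
  rw [h3 f hf hf0]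
  refine Finset.sum_congr ?_ fun _ _ => rfl
  ext; simp

theorem E_unit (J : Fin k → ℕ) (hJ : ∃ l, J l ≠ 0) : D.E b J (unit) = 0 := by
  obtain ⟨l, hl⟩ := hJ
  have hQ : ∀ (l : Fin k) (i : ℕ), i ≠ 0 → D.Q l i unit = 0 := by
    intro l i hi
    obtain ⟨i, rfl⟩ := Nat.exists_eq_succ_of_ne_zero hi
    by_cases h : Even i
    · rw [Nat.succ_eq_add_one, Q_succ_even _ _ h, PR_apply]
      simp [pr_unit]
    · rw [Nat.succ_eq_add_one, Q_succ_odd _ _ h, PC_apply]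
      simp [pr_unit]
  have key : ∀ ls : List (Fin k), l ∈ ls → D.ev b ls J unit = 0 := by
    intro ls hls
    induction ls with
    | nil => simp at hls
    | cons a ls ih =>
      rw [ev_cons]
      by_cases h0 : J a = 0
      · rw [h0]
        refine ih ?_
        rcases List.mem_cons.1 hls with h | h
        · exact absurd (h ▸ h0) hl
        · exact h
      · rw [hQ a _ h0, map_zero]
  rw [E, key _ (List.mem_finRange l), Int.cast_zero]

theorem E_unit_zero : D.E b (fun _ => 0) unit = 1 := by
  have key : ∀ ls : List (Fin k), D.ev b ls (fun _ => 0) unit = 1 := by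
    intro ls
    induction ls with
    | nil => rfl
    | cons a ls ih => rw [ev_cons]; exact ih
  rw [E, key, Int.cast_one]

/-- A function `a` to `ZMod m` has character `χ` if it changes by `χ l` under the action of the
generator on the coordinate `l`. -/
def HasChar (a : (Fin k → S) → ZMod m) (χ : Fin k → ZMod m) : Prop :=
  ∀ l v, a (onC l D.ζ v) = a v + χ l

theorem HasChar.iter {D : CellMoves S m M} {a : (Fin k → S) → ZMod m} {χ : Fin k → ZMod m}
    (h : D.HasChar a χ) (l : Fin k) (t : ℕ) (v : Fin k → S) :
    a (onC l D.ζ^[t] v) = a v + t * χ l := by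
  induction t generalizing v with
  | zero => simp [onC_id]
  | succ t ih =>
    have := congrFun (onC_comp (k := k) l D.ζ^[t] D.ζ) v
    rw [Function.iterate_succ, ← this, Function.comp_apply, ih, h]
    push_cast; ring

/-- Evaluation of the product with a class of degree one. -/
theorem E_x [NeZero m] {a : (Fin k → S) → ZMod m} {χ : Fin k → ZMod m} (ha : D.HasChar a χ)
    {c : Coch (Fin k → S)} (hc : Good (fun l => onC l D.ζ) c)
    (hd : ∀ L, ((d c L : ℤ) : ZMod m) = 0) (J : Fin k → ℕ) :
    ∃ κ : Fin k → ZMod m, (∀ l, χ l = 0 → κ l = 0) ∧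
      (∀ l, Odd (J l) → κ l = χ l ∨ κ l = -χ l) ∧
      (∀ l, Odd (J l) → (∀ l', l' ≠ l → Even (J l')) → κ l = χ l) ∧
      D.E b J (cup (xx a) c) = ∑ l, if J l = 0 then 0 else κ l * D.E b (low J l) c := by
  obtain ⟨s, h1, h2, h3⟩ := D.E_d b J
  let τ : Fin k → ZMod m := fun l =>
    if Odd (J l) then χ l else χ l * ∑ t ∈ Finset.range m, (t : ZMod m)
  refine ⟨fun l => s l * τ l, fun l hl => ?_, fun l hl => ?_, fun l hl hl' => ?_, ?_⟩
  · simp [τ, hl]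
  · rcases h1 l with h | h <;> simp [τ, hl, h]
  · simp [τ, hl, h2 l hl']
  · set α : Coch (Fin k → S) := lead (fun v => ((a v).cast : ℤ)) c with hα
    have e : D.E b J (cup (xx a) c) = D.E b J (d α) := by
      refine D.E_congr b J fun L => ?_
      rcases L with _ | ⟨v, _ | ⟨w, L⟩⟩
      · simp [cup]
      · simp [cup, d_cons, hα, lead]
      · rw [d_lead]
        simp [cup, cast_xx, hd]
    rw [e, E, h3 α (Norm_lead _ hc.norm) rfl, Int.cast_sum]
    refine Finset.sum_congr rfl fun l _ => ?_
    split_ifs with hJ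
    · simp
    rw [Int.cast_mul, mul_assoc]
    congr 1
    -- the shifted cochain
    have hpull : ∀ (t : ℕ) (L : List (Fin k → S)),
        ((pull (onC l D.ζ^[t]) α L : ℤ) : ZMod m) = α L + t * χ l * c L := by
      intro t L
      rcases L with _ | ⟨v, L⟩
      · simp [pull_apply, hα, lead, hc.nil]
      · have h := congrFun (D.pull_ζ_iter hc.inv l t) (v :: L)
        simp only [pull_apply, List.map_cons] at h
        simp only [pull_apply, hα, List.map_cons, lead, h, ha.iter]
        push_cast
        ring
    by_cases ho : Odd (J l)
    · simp only [τ, if_pos ho, T]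
      change D.E b (low J l) (D.Z l α - α) = _
      have : D.E b (low J l) (D.Z l α - α) = D.E b (low J l) (((χ l).cast : ℤ) • c) := by
        refine D.E_congr b _ fun L => ?_
        have := hpull 1 L
        simp only [Function.iterate_one] at this
        simp only [Z, Pi.sub_apply, Int.cast_sub, this]
        simp
      rw [this, E_mul]; simp
    · simp only [τ, if_neg ho, T]
      change D.E b (low J l) (D.Nm l α) = _
      have : D.E b (low J l) (D.Nm l α) =
          D.E b (low J l) (((χ l * ∑ t ∈ Finset.range m, (t : ZMod m)).cast : ℤ) • c) := by
        refine D.E_congr b _ fun L => ?_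
        rw [Nm_apply, Finset.sum_apply, Int.cast_sum, Finset.sum_congr rfl fun t _ => hpull t L,
          Finset.sum_add_distrib]
        simp [Finset.mul_sum, mul_comm]
      rw [this, E_mul]; simp

/-- Evaluation of the product with a class of degree two. -/
theorem E_y [NeZero m] {a a' : (Fin k → S) → ZMod m} {χ : Fin k → ZMod m} (ha : D.HasChar a χ)
    (ha' : D.HasChar a' χ) {c : Coch (Fin k → S)} (hc : Good (fun l => onC l D.ζ) c)
    (hd : d c = 0) (J : Fin k → ℕ) :
    ∃ s : Fin k → ZMod m, (∀ l, (∀ l', l' ≠ l → Even (J l')) → s l = 1) ∧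
      D.E b J (cup₂ (yy a a') c) =
        ∑ l, if J l = 0 ∨ Odd (J l) then 0 else s l * D.E b (low J l) (cup (xx a) c) := by
  obtain ⟨s, h1, h2, h3⟩ := D.E_d b J
  refine ⟨fun l => s l, fun l hl => by simp [h2 l hl], ?_⟩
  have hl : ∀ l, pull (onC l D.ζ) (cup (lam a a') c) = cup (lam a a') c := fun l =>
    pull_cup (lam_shift (ha l) (ha' l)) (hc.inv l)
  have key : (m : ℤ) * D.ev b (List.finRange k) J (cup₂ (yy a a') c) =
      (m : ℤ) * ∑ l, if J l = 0 ∨ Odd (J l) then 0 else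
        s l * D.ev b (List.finRange k) (low J l) (cup (lam a a') c) := by
    have := h3 _ (Norm_cup (lam_self a a') hc.norm) rfl
    rw [d_cup_lam a a' hc.nil hd, map_smul, smul_eq_mul] at this
    rw [this, Finset.mul_sum]
    refine Finset.sum_congr rfl fun l _ => ?_
    by_cases hJ : J l = 0
    · simp [hJ]
    by_cases ho : Odd (J l)
    · have : D.T l (J l) (cup (lam a a') c) = 0 := by
        rw [T, if_pos ho, LinearMap.sub_apply, Z, hl]; simp
      simp [ho, this]
    · have : D.T l (J l) (cup (lam a a') c) = (m : ℤ) • cup (lam a a') c := by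
        rw [T, if_neg ho, Nm_apply, Finset.sum_congr rfl fun t _ => D.pull_ζ_iter hl l t]
        simp
      rw [if_neg hJ, if_neg (by tauto), this, map_smul]
      simp; ring
  have key2 := mul_left_cancel₀ (by exact_mod_cast NeZero.ne m) key
  rw [E, key2, Int.cast_sum]
  refine Finset.sum_congr rfl fun l _ => ?_
  split_ifs with h
  · simp
  rw [Int.cast_mul]
  congr 1
  refine D.E_congr b _ fun L => ?_
  rcases L with _ | ⟨v, _ | ⟨w, L⟩⟩ <;> simp [cup, cast_xx, cast_lam]

end CellMoves

/-! ### The product class and its value on the top cell -/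

namespace CellMoves

open Coch

variable {S : Type*} {m M k : ℕ} (D : CellMoves S m M) (b : Fin k → S)

/-- The difference of two basis characters. -/
def chi (p : Fin k × Fin k) (l : Fin k) : ZMod m :=
  (if l = p.1 then 1 else 0) - (if l = p.2 then 1 else 0)

section products

variable (α : ℕ → Fin k × Fin k → (Fin k → S) → ZMod m)

/-- Product of classes of degree two, one for each listed pair of coordinates. The `i`-th factor
uses the functions with indices `j + 2 * i` and `j + 2 * i + 1`. -/
def yprod : ℕ → List (Fin k × Fin k) → Coch (Fin k → S)
  | _, [] => unit
  | j, p :: ps => cup₂ (yy (α j p) (α (j + 1) p)) (yprod (j + 2) ps)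

/-- Product of classes of degree one with a product of classes of degree two. -/
def xprod (ys : List (Fin k × Fin k)) : ℕ → List (Fin k × Fin k) → Coch (Fin k → S)
  | j, [] => yprod α j ys
  | j, p :: ps => cup (xx (α j p)) (xprod ys (j + 1) ps)

/-- The product vanishes on a tuple on which the functions with some index are constant. -/
theorem yprod_eq_zero (ys : List (Fin k × Fin k)) (j i : ℕ) (hi : j ≤ i)
    (hi' : i < j + 2 * ys.length) (L : List (Fin k → S))
    (h : ∀ p, ∀ v ∈ L, ∀ w ∈ L, α i p v = α i p w) : yprod α j ys L = 0 := by
  induction ys generalizing j L with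
  | nil => simp at hi'; omega
  | cons p ys ih =>
    rcases L with _ | ⟨v, _ | ⟨w, _ | ⟨u, L⟩⟩⟩
    · rfl
    · rfl
    · rfl
    · simp only [yprod, cup₂]
      have h1 := h p v (by simp) w (by simp)
      have h2 := h p w (by simp) u (by simp)
      by_cases hj : i = j
      · subst hj
        simp [yy, dlam, lam, h1, h2]
      by_cases hj' : i = j + 1
      · subst hj'
        simp [yy, dlam, lam, h2]
      · rw [ih (j + 2) (by omega) (by simp at hi'; omega), mul_zero]
        intro p x hx y hy
        exact h p x (by simp at hx ⊢; tauto) y (by simp at hy ⊢; tauto)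

theorem xprod_eq_zero (ys xs : List (Fin k × Fin k)) (j i : ℕ) (hi : j ≤ i)
    (hi' : i < j + xs.length + 2 * ys.length) (L : List (Fin k → S))
    (h : ∀ p, ∀ v ∈ L, ∀ w ∈ L, α i p v = α i p w) : xprod α ys j xs L = 0 := by
  induction xs generalizing j L with
  | nil => exact yprod_eq_zero α ys j i hi (by simpa using hi') L h
  | cons p xs ih =>
    rcases L with _ | ⟨v, _ | ⟨w, L⟩⟩
    · rfl
    · rfl
    · simp only [xprod, cup]
      have h1 := h p v (by simp) w (by simp)
      by_cases hj : i = j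
      · subst hj
        simp [xx, h1]
      · rw [ih (j + 1) (by omega) (by simp at hi'; omega), mul_zero]
        intro p x hx y hy
        exact h p x (by simp at hx ⊢; tauto) y (by simp at hy ⊢; tauto)

variable {α}

theorem good_yprod (hα : ∀ j p, D.HasChar (α j p) (chi p))
    (ys : List (Fin k × Fin k)) (j : ℕ) :
    Good (fun l => onC l D.ζ) (yprod α j ys) := by
  induction ys generalizing j with
  | nil => exact ⟨Norm_unit, rfl, fun l => pull_unit _⟩
  | cons p ys ih =>
    exact ⟨Norm_cup₂ (yy_left _ _) (yy_right _ _) (ih _).norm, rfl,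
      fun l => pull_cup₂ (yy_shift (hα _ _ l) (hα _ _ l)) ((ih _).inv l)⟩

theorem d_yprod (hα : ∀ j p, D.HasChar (α j p) (chi p))
    [NeZero m] (ys : List (Fin k × Fin k)) (j : ℕ) : d (yprod α j ys) = 0 := by
  induction ys generalizing j with
  | nil => exact d_unit
  | cons p ys ih => exact d_cup_yy _ _ (D.good_yprod hα _ _).nil (ih _)

theorem good_xprod (hα : ∀ j p, D.HasChar (α j p) (chi p))
    (ys xs : List (Fin k × Fin k)) (j : ℕ) :
    Good (fun l => onC l D.ζ) (xprod α ys j xs) := by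
  induction xs generalizing j with
  | nil => exact D.good_yprod hα ys j
  | cons p xs ih =>
    exact ⟨Norm_cup (xx_self _) (ih _).norm, rfl,
      fun l => pull_cup (xx_shift (hα _ _ l)) ((ih _).inv l)⟩

theorem d_xprod (hα : ∀ j p, D.HasChar (α j p) (chi p))
    [NeZero m] (ys xs : List (Fin k × Fin k)) (j : ℕ) (L : List (Fin k → S)) :
    ((d (xprod α ys j xs) L : ℤ) : ZMod m) = 0 := by
  induction xs generalizing j L with
  | nil => simp [xprod, D.d_yprod hα]
  | cons p xs ih => exact d_cup_xx _ (D.good_xprod hα _ _ _).nil (ih _) L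

end products

/-- The number of odd entries of a multidegree. -/
def oddc (J : Fin k → ℕ) : ℕ := (Finset.univ.filter fun l => Odd (J l)).card

theorem oddc_low_le (J : Fin k → ℕ) (l : Fin k) : oddc J ≤ oddc (low J l) + 1 := by
  unfold oddc
  refine le_trans (Finset.card_le_card ?_) (Finset.card_insert_le l _)
  intro x hx
  by_cases h : x = l
  · simp [h]
  · simpa [h, low_ne] using hx

theorem oddc_low_even (J : Fin k → ℕ) (l : Fin k) (h0 : J l ≠ 0) (he : ¬ Odd (J l)) :
    oddc (low J l) = oddc J + 1 := by
  unfold oddc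
  rw [← Finset.card_insert_of_notMem (a := l) (by simpa using he)]
  congr 1
  ext x
  by_cases h : x = l
  · subst h
    have : Odd (J x - 1) := by
      rw [Nat.not_odd_iff_even] at he
      exact Nat.Even.sub_odd (by omega) he odd_one
    simp [low_self, this]
  · simp [h, low_ne]

section evaluation

variable [NeZero m] {α : ℕ → Fin k × Fin k → (Fin k → S) → ZMod m}

/-- Products of classes of degree two vanish on cells with an entry of odd degree. -/
theorem E_yprod_odd (hα : ∀ j p, D.HasChar (α j p) (chi p))
    (ys : List (Fin k × Fin k)) (j : ℕ) (J : Fin k → ℕ) (hJ : 0 < oddc J) :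
    D.E b J (yprod α j ys) = 0 := by
  induction ys generalizing j J with
  | nil =>
    refine D.E_unit b J ?_
    obtain ⟨l, hl⟩ := Finset.card_pos.1 hJ
    refine ⟨l, fun h => ?_⟩
    simp [h] at hl
  | cons p ys ih =>
    obtain ⟨s, -, hs⟩ := D.E_y b (hα j p) (hα (j + 1) p) (D.good_yprod hα ys (j + 2))
      (D.d_yprod hα ys (j + 2)) J
    rw [yprod, hs]
    refine Finset.sum_eq_zero fun l _ => ?_
    split_ifs with h
    · rfl
    obtain ⟨κ, -, -, -, hκ⟩ := D.E_x b (hα j p) (D.good_yprod hα ys (j + 2))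
      (fun L => by simp [D.d_yprod hα ys (j + 2)]) (low J l)
    rw [hκ, Finset.sum_eq_zero, mul_zero]
    intro l' _
    split_ifs with h'
    · rfl
    rw [ih, mul_zero]
    push Not at h
    have h1 := oddc_low_even J l h.1 (by simpa using h.2)
    have h2 := oddc_low_le (low J l) l'
    omega

/-- The coefficient of `z ^ J` in the product of the `z p.1 - z p.2`. -/
def val : List (Fin k × Fin k) → (Fin k → ℕ) → ℤ
  | [], J => if ∀ l, J l = 0 then 1 else 0
  | p :: ps, J => (if J p.1 = 0 then 0 else val ps (low J p.1)) -
      (if J p.2 = 0 then 0 else val ps (low J p.2))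

/-- On cells with even entries the classes of degree two multiply like polynomials. -/
theorem E_yprod (hα : ∀ j p, D.HasChar (α j p) (chi p))
    (ys : List (Fin k × Fin k)) (j : ℕ) (J : Fin k → ℕ) :
    D.E b (fun l => 2 * J l) (yprod α j ys) = val ys J := by
  induction ys generalizing j J with
  | nil =>
    rw [val]
    split_ifs with h
    · simp only [h, mul_zero, Int.cast_one]
      exact D.E_unit_zero b
    · push Not at h
      obtain ⟨l, hl⟩ := h
      rw [Int.cast_zero]
      exact D.E_unit b _ ⟨l, by omega⟩
  | cons p ys ih =>
    set c := yprod α (j + 2) ys with hc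
    obtain ⟨s, hs1, hs⟩ := D.E_y b (hα j p) (hα (j + 1) p) (D.good_yprod hα ys (j + 2))
      (D.d_yprod hα ys (j + 2)) (fun l => 2 * J l)
    have hterm : ∀ l, J l ≠ 0 → D.E b (low (fun l => 2 * J l) l) (cup (xx (α j p)) c) =
        chi p l * ((val ys (low J l) : ℤ) : ZMod m) := by
      intro l hl
      obtain ⟨κ, -, -, hκ1, hκ⟩ := D.E_x b (hα j p) (D.good_yprod hα ys (j + 2))
        (fun L => by simp [D.d_yprod hα ys (j + 2)]) (low (fun l => 2 * J l) l)
      have ho : Odd (low (fun l => 2 * J l) l l) := by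
        rw [low_self]; exact Nat.Even.sub_odd (by omega) (by simp) odd_one
      rw [hκ, Finset.sum_eq_single l]
      · rw [if_neg (by rw [low_self]; omega), hκ1 l ho (fun l' h => by rw [low_ne _ h]; simp)]
        have : low (low (fun l => 2 * J l) l) l = fun l' => 2 * low J l l' := by
          funext l'
          by_cases h : l' = l
          · subst h; simp only [low_self]; omega
          · simp only [low_ne _ h]
        rw [this, ih]
      · intro l' _ hl'
        split_ifs with h
        · rfl
        rw [low_ne _ hl'] at h
        rw [D.E_yprod_odd b hα, mul_zero]
        rw [oddc_low_even _ l' (by rwa [low_ne _ hl']) (by rw [low_ne _ hl']; simp)]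
        omega
      · simp
    have hterm2 : ∀ l, (if 2 * J l = 0 ∨ Odd (2 * J l) then 0 else
        s l * D.E b (low (fun l => 2 * J l) l) (cup (xx (α j p)) c)) =
        (if l = p.1 then (if J l = 0 then (0 : ZMod m) else val ys (low J l)) else 0) -
        (if l = p.2 then (if J l = 0 then (0 : ZMod m) else val ys (low J l)) else 0) := by
      intro l
      by_cases h : J l = 0
      · simp [h]
      · rw [if_neg (by simp [h]), hterm l h, hs1 l (by simp), chi]
        split_ifs <;> simp
    rw [yprod, hs, Finset.sum_congr rfl fun l _ => hterm2 l, Finset.sum_sub_distrib,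
      Finset.sum_ite_eq', Finset.sum_ite_eq', val]
    simp only [Finset.mem_univ, if_true]
    push_cast
    rfl

/-- Each class of degree one compensates for at most one entry of odd degree. -/
theorem E_xprod_odd (hα : ∀ j p, D.HasChar (α j p) (chi p))
    (ys xs : List (Fin k × Fin k)) (j : ℕ) (J : Fin k → ℕ)
    (hJ : xs.length < oddc J) : D.E b J (xprod α ys j xs) = 0 := by
  induction xs generalizing j J with
  | nil => exact D.E_yprod_odd b hα _ _ _ (by simpa using hJ)
  | cons p xs ih =>
    obtain ⟨κ, -, -, -, hκ⟩ := D.E_x b (hα j p) (D.good_xprod hα ys xs (j + 1))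
      (D.d_xprod hα ys xs (j + 1)) J
    rw [xprod, hκ]
    refine Finset.sum_eq_zero fun l _ => ?_
    split_ifs
    · rfl
    rw [ih, mul_zero]
    have := oddc_low_le J l
    simp at hJ
    omega

/-- The class of degree one attached to `(l, z)` lowers the odd degree in the direction `l`. -/
theorem E_xprod (hα : ∀ j p, D.HasChar (α j p) (chi p))
    (z : Fin k) (ys : List (Fin k × Fin k)) (ls : List (Fin k)) (j : ℕ)
    (hls : ls.Nodup) (hz : z ∉ ls) (J : Fin k → ℕ) :
    D.E b (fun l => 2 * J l + if l ∈ ls then 1 else 0) (xprod α ys j (ls.map fun l => (l, z))) =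
      val ys J ∨
    D.E b (fun l => 2 * J l + if l ∈ ls then 1 else 0) (xprod α ys j (ls.map fun l => (l, z))) =
      -val ys J := by
  induction ls generalizing j with
  | nil =>
    left
    simpa [xprod] using D.E_yprod b hα ys j J
  | cons a ls ih =>
    obtain ⟨ha, hls'⟩ := List.nodup_cons.1 hls
    have haz : a ≠ z := by rintro rfl; simp at hz
    have hz' : z ∉ ls := fun h => hz (by simp [h])
    set K : Fin k → ℕ := fun l => 2 * J l + if l ∈ a :: ls then 1 else 0 with hK
    have hKo : ∀ l, Odd (K l) ↔ l ∈ a :: ls := by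
      intro l
      change Odd (2 * J l + if l ∈ a :: ls then 1 else 0) ↔ _
      by_cases h : l ∈ a :: ls
      · rw [if_pos h]; exact ⟨fun _ => h, fun _ => by simp⟩
      · rw [if_neg h]; exact ⟨fun h' => absurd h' (by simp), fun h' => absurd h' h⟩
    have hodd : oddc K = ls.length + 1 := by
      unfold oddc
      rw [show (Finset.univ.filter fun l => Odd (K l)) = (a :: ls).toFinset from ?_,
        List.toFinset_card_of_nodup hls]
      · rfl
      · ext l
        rw [Finset.mem_filter, List.mem_toFinset, hKo]
        simp
    obtain ⟨κ, hκ0, hκ1, -, hκ⟩ := D.E_x b (hα j (a, z)) (D.good_xprod hα ys _ (j + 1))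
      (D.d_xprod hα ys (ls.map fun l => (l, z)) (j + 1)) K
    have hlow : low K a = fun l => 2 * J l + if l ∈ ls then 1 else 0 := by
      funext l
      by_cases h : l = a
      · subst h; simp [low_self, hK, ha]
      · simp [low_ne _ h, hK, h]
    have hKa : Odd (K a) := (hKo a).2 (by simp)
    have key : D.E b K (xprod α ys j ((a :: ls).map fun l => (l, z))) =
        κ a * D.E b (low K a) (xprod α ys (j + 1) (ls.map fun l => (l, z))) := by
      rw [List.map_cons, xprod, hκ, Finset.sum_eq_single a]
      · rw [if_neg]; rintro h; simp [h] at hKa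
      · intro l _ hla
        split_ifs with h
        · rfl
        by_cases ho : Odd (K l)
        · have hl : l ∈ a :: ls := (hKo l).1 ho
          have hlz : l ≠ z := by rintro rfl; exact hz hl
          rw [hκ0 l (by simp [chi, hla, hlz]), zero_mul]
        · rw [D.E_xprod_odd b hα, mul_zero]
          rw [oddc_low_even _ _ h ho, hodd]
          simp
      · simp
    have hκa : κ a = 1 ∨ κ a = -1 := by simpa [chi, haz] using hκ1 a hKa
    rw [key, hlow]
    rcases ih (j + 1) hls' hz' with h | h <;> rcases hκa with h' | h' <;> rw [h, h'] <;> simp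

end evaluation

/-- The expansion of a power of a binomial. -/
theorem val_replicate (p : Fin k × Fin k) (hp : p.1 ≠ p.2) (ps : List (Fin k × Fin k)) (u w : ℕ)
    (J : Fin k → ℕ) (hu : J p.1 = u) (hw : J p.2 = w) :
    val (List.replicate (u + w) p ++ ps) J = (-1) ^ w * (u + w).choose u *
      val ps (fun l => if l = p.1 ∨ l = p.2 then 0 else J l) := by
  obtain ⟨t, ht⟩ : ∃ t, t = u + w := ⟨_, rfl⟩
  induction t generalizing u w J with
  | zero =>
    obtain ⟨rfl, rfl⟩ : u = 0 ∧ w = 0 := by omega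
    have : (fun l => if l = p.1 ∨ l = p.2 then 0 else J l) = J := by
      funext l
      split_ifs with h
      · rcases h with rfl | rfl
        · exact hu.symm
        · exact hw.symm
      · rfl
    rw [this]; simp
  | succ t ih =>
    set R := val ps (fun l => if l = p.1 ∨ l = p.2 then 0 else J l) with hR
    have e : ∀ q, q = p.1 ∨ q = p.2 → (fun l => if l = p.1 ∨ l = p.2 then 0 else low J q l) =
        fun l => if l = p.1 ∨ l = p.2 then 0 else J l := by
      intro q hq
      funext l
      split_ifs with h
      · rfl
      · rw [low_ne]; rintro rfl; exact h hq
    have h1 : ∀ u', u = u' + 1 → val (List.replicate t p ++ ps) (low J p.1) =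
        (-1) ^ w * (u' + w).choose u' * R := by
      intro u' hu'
      have := ih u' w (low J p.1) (by rw [low_self]; omega) (by rw [low_ne _ hp.symm, hw])
        (by omega)
      rw [show t = u' + w by omega, this, e _ (Or.inl rfl)]
    have h2 : ∀ w', w = w' + 1 → val (List.replicate t p ++ ps) (low J p.2) =
        (-1) ^ w' * (u + w').choose u * R := by
      intro w' hw'
      have := ih u w' (low J p.2) (by rw [low_ne _ hp, hu]) (by rw [low_self]; omega) (by omega)
      rw [show t = u + w' by omega, this, e _ (Or.inr rfl)]
    rw [← ht, List.replicate_succ, List.cons_append, val, hu, hw, ht]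
    rcases u with _ | u <;> rcases w with _ | w
    · omega
    · rw [h2 w rfl]
      simp [pow_succ]
    · rw [h1 u rfl]
      simp
    · rw [h1 u rfl, h2 w rfl, if_neg (by omega), if_neg (by omega)]
      rw [show u + 1 + (w + 1) = (u + 1 + w) + 1 by ring, Nat.choose_succ_succ,
        show u + (w + 1) = u + 1 + w by ring]
      push_cast
      ring

/-- The coordinates occurring in a list of pairs. -/
def coords (qs : List (Fin k × Fin k)) : List (Fin k) := qs.flatMap fun p => [p.1, p.2]

theorem val_pairs (n : ℕ) (qs rest : List (Fin k × Fin k)) (hq : (coords qs).Nodup)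
    (J : Fin k → ℕ) (hJ : ∀ l ∈ coords qs, J l = n) :
    val ((qs.flatMap fun p => List.replicate (n + n) p) ++ rest) J =
      ((-1) ^ n * (2 * n).choose n) ^ qs.length *
        val rest (fun l => if l ∈ coords qs then 0 else J l) := by
  induction qs generalizing J with
  | nil => simp [coords]
  | cons p qs ih =>
    have hc : coords (p :: qs) = p.1 :: p.2 :: coords qs := rfl
    rw [hc] at hq hJ
    obtain ⟨h1, h2⟩ := List.nodup_cons.1 hq
    obtain ⟨h3, h4⟩ := List.nodup_cons.1 h2
    rw [List.flatMap_cons, List.append_assoc, val_replicate p (fun h => h1 (by simp [h])) _ n n J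
      (hJ _ (by simp)) (hJ _ (by simp)), ih h4 _ (fun l hl => ?_), List.length_cons, pow_succ,
      ← two_mul]
    · have : (fun l => if l ∈ coords qs then 0 else if l = p.1 ∨ l = p.2 then 0 else J l) =
          fun l => if l ∈ coords (p :: qs) then 0 else J l := by
        funext l
        rw [hc]
        by_cases ha : l ∈ coords qs <;> by_cases hb : l = p.1 <;> by_cases hd : l = p.2 <;>
          simp [ha, hb, hd]
      rw [this]; ring
    · rw [if_neg, hJ l (by simp [hl])]
      rintro (rfl | rfl)
      · exact h1 (by simp [hl])
      · exact h3 hl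

/-- Pairs of consecutive coordinates. -/
def pairList (k : ℕ) : List (Fin k × Fin k) :=
  (List.finRange (k / 2)).map fun s : Fin (k / 2) =>
    (⟨2 * s, by have := s.2; omega⟩, ⟨2 * s + 1, by have := s.2; omega⟩)

theorem mem_coords_pairList (l : Fin k) : l ∈ coords (pairList k) ↔ (l : ℕ) < 2 * (k / 2) := by
  simp only [coords, pairList, List.mem_flatMap, List.mem_map, List.mem_finRange, true_and]
  constructor
  · rintro ⟨p, ⟨s, rfl⟩, h⟩
    have := s.2
    simp [Fin.ext_iff] at h
    omega
  · intro h
    refine ⟨_, ⟨⟨l / 2, by omega⟩, rfl⟩, ?_⟩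
    simp [Fin.ext_iff]
    omega

theorem nodup_coords_pairList : (coords (pairList k)).Nodup := by
  rw [coords, pairList, List.flatMap_map, List.nodup_flatMap]
  refine ⟨fun s _ => by simp, ?_⟩
  refine (List.nodup_finRange _).imp ?_
  intro s t hst
  have : (s : ℕ) ≠ t := fun h => hst (Fin.ext h)
  intro x hx hx'
  simp [Fin.ext_iff] at hx hx'
  omega

/-- The factors of degree two in the product class. -/
def yList (k n : ℕ) (z : Fin k) : List (Fin k × Fin k) :=
  ((pairList k).flatMap fun p => List.replicate (n + n) p) ++
    if Even k then [] else List.replicate (n + 0) (⟨k - 1, by have := z.2; omega⟩, z)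

theorem val_yList (k n : ℕ) (hk : 2 ≤ k) (z : Fin k) (hz : (z : ℕ) = 0) :
    val (yList k n z) (fun _ => n) = ((-1) ^ n * (2 * n).choose n) ^ (k / 2) := by
  have hl : (pairList k).length = k / 2 := by simp [pairList]
  rw [yList, val_pairs _ _ _ nodup_coords_pairList _ (fun _ _ => rfl), hl]
  split_ifs with h
  · rw [val, if_pos, mul_one]
    intro l
    rw [if_pos]
    rw [mem_coords_pairList]
    have := l.2
    have := Nat.even_iff.1 h
    omega
  · have h1 : k % 2 = 1 := by simpa [Nat.even_iff] using h
    have := val_replicate (k := k) (⟨k - 1, by omega⟩, z) (fun h => by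
      simp [Fin.ext_iff, hz] at h; omega) [] n 0
      (fun l => if l ∈ coords (pairList k) then 0 else n)
      (by rw [if_neg]; rw [mem_coords_pairList]; simp; omega)
      (by rw [if_pos]; rw [mem_coords_pairList]; change (z : ℕ) < _; omega)
    rw [List.append_nil] at this
    rw [this, val, if_pos]
    · simp
    · intro l
      split_ifs with h2 h3
      · rfl
      · rfl
      · exfalso
        rw [mem_coords_pairList] at h3
        push Not at h2
        apply h2.1
        have := l.2
        ext
        simp
        omega

theorem length_yList (k n : ℕ) (hk : 2 ≤ k) (z : Fin k) :
    (k - 1) + 2 * (yList k n z).length = k * (2 * n + 1) - 1 := by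
  have hl : ((pairList k).flatMap fun p => List.replicate (n + n) p).length = (k / 2) * (2 * n) := by
    simp [pairList, List.length_flatMap, Function.comp_def, two_mul]
  rw [yList, List.length_append, hl]
  rcases Nat.even_or_odd' k with ⟨q, rfl | rfl⟩
  · rw [if_pos (by simp), Nat.mul_div_cancel_left _ (by norm_num)]
    rw [List.length_nil]
    have : 2 * q * (2 * n + 1) = 2 * (q * (2 * n)) + 2 * q := by ring
    omega
  · rw [if_neg (by simp), show (2 * q + 1) / 2 = q by omega, List.length_replicate]
    have : (2 * q + 1) * (2 * n + 1) = 2 * (q * (2 * n)) + 2 * q + 2 * n + 1 := by ring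
    omega

/-- If functions `α i` with the right characters are given for each of `k (2 n + 1) - 1` indices, and
every cochain that vanishes on tuples where some `α i` is constant has value zero on the cell of
codimension one, then the binomial coefficient power is divisible by `m`. -/
theorem dvd_choose [NeZero m] {α : ℕ → Fin k × Fin k → (Fin k → S) → ZMod m}
    (hα : ∀ j p, D.HasChar (α j p) (chi p)) (n : ℕ) (hk : 2 ≤ k) (z : Fin k) (hz : (z : ℕ) = 0)
    (h : ∀ c : Coch (Fin k → S), (∀ L, (∃ i < k * (2 * n + 1) - 1, ∀ p, ∀ v ∈ L, ∀ w ∈ L,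
      α i p v = α i p w) → c L = 0) →
      D.ev b (List.finRange k) (fun l => 2 * n + if l ∈ (List.finRange k).erase z then 1 else 0) c
        = 0) :
    m ∣ (2 * n).choose n ^ (k / 2) := by
  have hlen : ((List.finRange k).erase z).length = k - 1 := by
    rw [List.length_erase_of_mem (List.mem_finRange z), List.length_finRange]
  have h1 := h (xprod α (yList k n z) 0 (((List.finRange k).erase z).map fun l => (l, z)))
    (fun L ⟨i, hi, hL⟩ => xprod_eq_zero α _ _ 0 i (Nat.zero_le _) (by
      rw [zero_add, List.length_map, hlen, length_yList k n hk]; exact hi) L hL)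
  have h2 := D.E_xprod b hα z (yList k n z) ((List.finRange k).erase z) 0
    ((List.nodup_finRange k).erase z) (by
      rw [(List.nodup_finRange k).mem_erase_iff]; simp) (fun _ => n)
  have h3 : ((val (yList k n z) (fun _ => n) : ℤ) : ZMod m) = 0 := by
    rw [E, h1, Int.cast_zero] at h2
    rcases h2 with h2 | h2
    · exact h2.symm
    · exact neg_eq_zero.1 h2.symm
  rw [val_yList k n hk z hz, ZMod.intCast_zmod_eq_zero_iff_dvd, mul_pow,
    IsUnit.dvd_mul_left ((isUnit_one.neg.pow _).pow _)] at h3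
  exact_mod_cast h3

end CellMoves

/-! ### Cells of small mesh -/

namespace CellMoves

open Coch

variable {S : Type*} [PseudoMetricSpace S] {m M k : ℕ}

/-- Metric control of the moves: every step has length at most `δ`, the moves do not increase
distances, and the moves are compatible with a filtration `W` of the space for which the `j`-th
cone is controlled on `W j` (for `j < n`) and takes values in `W (j + 1)`. -/
structure Geom (D : CellMoves S m M) (W : ℕ → Set S) (n : ℕ) (δ : ℝ) : Prop where
  δ_nonneg : 0 ≤ δ
  mono : Monotone W
  g_mem : ∀ j, ∀ z ∈ W j, D.g z ∈ W j
  g_le : ∀ z w, dist (D.g z) (D.g w) ≤ dist z w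
  g_step : ∀ z, dist z (D.g z) ≤ δ
  cone_mem : ∀ j < n, ∀ t, ∀ z ∈ W j, D.cone j t z ∈ W (j + 1)
  cone_le : ∀ j < n, ∀ t, ∀ z ∈ W j, ∀ w ∈ W j, dist (D.cone j t z) (D.cone j t w) ≤ dist z w
  cone_step : ∀ j < n, ∀ t, ∀ z ∈ W j, dist (D.cone j t z) (D.cone j (t + 1) z) ≤ δ

/-- The cochain vanishes on nonempty tuples of diameter at most `ε` whose `l`-th coordinates lie
in the filtration step `K l`. -/
def Small (W : ℕ → Set S) (K : Fin k → ℕ) (ε : ℝ) (f : Coch (Fin k → S)) : Prop :=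
  ∀ L : List (Fin k → S), L ≠ [] → (∀ v ∈ L, ∀ l, v l ∈ W (K l)) →
    (∀ v ∈ L, ∀ w ∈ L, ∀ l, dist (v l) (w l) ≤ ε) → f L = 0

theorem Small.sum {W : ℕ → Set S} {K : Fin k → ℕ} {ε : ℝ} {ι : Type*} {s : Finset ι}
    {f : ι → Coch (Fin k → S)} (h : ∀ i ∈ s, Small W K ε (f i)) : Small W K ε (∑ i ∈ s, f i) :=
  fun L h0 h1 h2 => by
    rw [Finset.sum_apply]; exact Finset.sum_eq_zero fun i hi => h i hi L h0 h1 h2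

theorem Small.pr {W : ℕ → Set S} {K : Fin k → ℕ} {ε δ : ℝ} {f : Coch (Fin k → S)}
    (hf : Small W K ε f) (hδ : 0 ≤ δ) (l : Fin k) (a : ℕ) (p q : S → S)
    (hp : ∀ z ∈ W a, p z ∈ W (K l)) (hq : ∀ z ∈ W a, q z ∈ W (K l))
    (hp' : ∀ z ∈ W a, ∀ w ∈ W a, dist (p z) (p w) ≤ dist z w)
    (hq' : ∀ z ∈ W a, ∀ w ∈ W a, dist (q z) (q w) ≤ dist z w)
    (hpq : ∀ z ∈ W a, dist (p z) (q z) ≤ δ) :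
    Small W (Function.update K l a) (ε - δ) (pr (onC l p) (onC l q) f) := by
  intro L h0 h1 h2
  refine pr_eq_zero _ _ _ _ fun L' h0' hL' => hf L' h0' ?_ ?_
  · intro x hx l'
    obtain ⟨v, hv, h⟩ := hL' x hx
    have := h1 v hv l'
    by_cases hl : l' = l
    · subst hl
      rw [Function.update_self] at this
      rcases h with rfl | rfl
      · simpa [onC] using hp _ this
      · simpa [onC] using hq _ this
    · rw [Function.update_of_ne hl] at this
      rcases h with rfl | rfl <;> simpa [onC, hl] using this
  · intro x hx y hy l'
    obtain ⟨v, hv, h⟩ := hL' x hx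
    obtain ⟨w, hw, h'⟩ := hL' y hy
    have hvW := h1 v hv l'
    have hwW := h1 w hw l'
    have hd := h2 v hv w hw l'
    by_cases hl : l' = l
    · subst hl
      rw [Function.update_self] at hvW hwW
      rcases h with rfl | rfl <;> rcases h' with rfl | rfl <;>
        simp only [onC, Function.update_self]
      · linarith [hp' _ hvW _ hwW]
      · linarith [hp' _ hvW _ hwW, hpq _ hwW, dist_triangle (p (v l')) (p (w l')) (q (w l'))]
      · linarith [hp' _ hvW _ hwW, hpq _ hvW, dist_triangle (q (v l')) (p (v l')) (p (w l')),
          dist_comm (q (v l')) (p (v l'))]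
      · linarith [hq' _ hvW _ hwW]
    · rcases h with rfl | rfl <;> rcases h' with rfl | rfl <;>
        simp only [onC, Function.update_of_ne hl] <;> linarith

variable {D : CellMoves S m M} {W : ℕ → Set S} {n : ℕ} {δ : ℝ}

theorem Geom.iter_mem (hD : D.Geom W n δ) (t j : ℕ) (z : S) (hz : z ∈ W j) : D.g^[t] z ∈ W j := by
  induction t with
  | zero => exact hz
  | succ t ih => rw [Function.iterate_succ_apply']; exact hD.g_mem _ _ ih

theorem Geom.iter_le (hD : D.Geom W n δ) (t : ℕ) (z w : S) :
    dist (D.g^[t] z) (D.g^[t] w) ≤ dist z w := by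
  induction t with
  | zero => exact le_rfl
  | succ t ih =>
    rw [Function.iterate_succ_apply', Function.iterate_succ_apply']
    exact (hD.g_le _ _).trans ih

theorem Small.PR (hD : D.Geom W n δ)
    {K : Fin k → ℕ} {ε : ℝ} {f : Coch (Fin k → S)} (hf : Small W K ε f)
    (l : Fin k) : Small W K (ε - δ) (D.PR l f) := by
  rw [PR_apply']
  refine Small.sum fun t _ => ?_
  have := hf.pr hD.δ_nonneg l (K l) (D.g^[t]) (D.g^[t + 1]) (hD.iter_mem _ _) (hD.iter_mem _ _)
    (fun z _ w _ => hD.iter_le _ _ _) (fun z _ w _ => hD.iter_le _ _ _)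
    (fun z _ => by rw [Function.iterate_succ_apply']; exact hD.g_step _)
  rwa [Function.update_eq_self] at this

theorem Small.PC (hD : D.Geom W n δ)
    {K : Fin k → ℕ} {ε : ℝ} {f : Coch (Fin k → S)} (hf : Small W K ε f)
    (l : Fin k) (j : ℕ) (hj : j + 1 ≤ K l) (hj' : j < n) :
    Small W (Function.update K l j) (ε - δ) (D.PC l j f) := by
  rw [PC_apply]
  refine Small.sum fun t _ => ?_
  exact hf.pr hD.δ_nonneg l j _ _ (fun z hz => hD.mono hj (hD.cone_mem _ hj' _ _ hz))
    (fun z hz => hD.mono hj (hD.cone_mem _ hj' _ _ hz)) (hD.cone_le _ hj' _) (hD.cone_le _ hj' _)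
    (hD.cone_step _ hj' _)

theorem Small.Nm (hD : D.Geom W n δ)
    {K : Fin k → ℕ} {ε : ℝ} {f : Coch (Fin k → S)} (hf : Small W K ε f)
    (l : Fin k) : Small W K ε (D.Nm l f) := by
  rw [Nm_apply]
  refine Small.sum fun t _ => ?_
  intro L h0 h1 h2
  rw [pull_apply]
  refine hf _ (by simpa using h0) ?_ ?_
  · intro x hx l'
    obtain ⟨v, hv, rfl⟩ := List.mem_map.1 hx
    by_cases hl : l' = l
    · subst hl
      simp only [onC, Function.update_self, ζ, ← Function.iterate_mul]
      exact hD.iter_mem _ _ _ (h1 v hv _)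
    · simp only [onC, Function.update_of_ne hl]
      exact h1 v hv _
  · intro x hx y hy l'
    obtain ⟨v, hv, rfl⟩ := List.mem_map.1 hx
    obtain ⟨w, hw, rfl⟩ := List.mem_map.1 hy
    by_cases hl : l' = l
    · subst hl
      simp only [onC, Function.update_self, ζ, ← Function.iterate_mul]
      exact (hD.iter_le _ _ _).trans (h2 v hv w hw _)
    · simp only [onC, Function.update_of_ne hl]
      exact h2 v hv w hw _

theorem Small.Q (hD : D.Geom W n δ)
    {K : Fin k → ℕ} {ε : ℝ} {f : Coch (Fin k → S)} (hf : Small W K ε f)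
    (l : Fin k) (i : ℕ) (hi : i / 2 ≤ K l) (hin : i / 2 ≤ n) :
    Small W (Function.update K l 0) (ε - i * δ) (D.Q l i f) := by
  induction i generalizing K ε f with
  | zero =>
    intro L h0 h1 h2
    refine hf L h0 (fun v hv l' => ?_) (by simpa using h2)
    refine hD.mono ?_ (h1 v hv l')
    by_cases hl : l' = l
    · subst hl; simp
    · simp [hl]
  | succ i ih =>
    push_cast
    rw [show ε - (i + 1) * δ = (ε - δ) - i * δ by ring]
    by_cases h : Even i
    · rw [Q_succ_even _ _ h]
      exact ih (Small.PR hD hf l) (by omega) (by omega)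
    · rw [Q_succ_odd _ _ h]
      have ho : i % 2 = 1 := by simpa [Nat.even_iff] using h
      have := ih (Small.Nm hD (Small.PC hD hf l (i / 2) (by omega) (by omega)) l)
        (by simp) (by omega)
      rw [Function.update_idem] at this
      intro L h0 h1 h2
      rw [Pi.neg_apply, this L h0 h1 h2, neg_zero]

/-- A cochain that vanishes on small tuples has value zero on every cell whose mesh is small. -/
theorem Small.ev (hD : D.Geom W n δ)
    (ls : List (Fin k)) (hls : ls.Nodup) (J : Fin k → ℕ) {K : Fin k → ℕ} {ε : ℝ}
    {f : Coch (Fin k → S)} (hf : Small W K ε f) (hK : ∀ l ∈ ls, J l / 2 ≤ K l ∧ J l / 2 ≤ n)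
    (b : Fin k → S) (hb : ∀ l, b l ∈ W 0) (hε : (ls.map J).sum * δ ≤ ε) :
    D.ev b ls J f = 0 := by
  induction ls generalizing K ε f with
  | nil =>
    refine hf [b] (by simp) (fun v hv l => ?_) (fun v hv w hw l => ?_)
    · rw [List.mem_singleton.1 hv]; exact hD.mono (Nat.zero_le _) (hb l)
    · rw [List.mem_singleton.1 hv, List.mem_singleton.1 hw, dist_self]
      simpa using hε
  | cons a ls ih =>
    obtain ⟨ha, hls'⟩ := List.nodup_cons.1 hls
    rw [ev_cons]
    refine ih hls' (Small.Q hD hf a (J a) (hK a (by simp)).1 (hK a (by simp)).2) ?_ ?_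
    · intro l hl
      rw [Function.update_of_ne (by rintro rfl; exact ha hl)]
      exact hK l (by simp [hl])
    · simp only [List.map_cons, List.sum_cons, Nat.cast_add] at hε
      linarith

end CellMoves

/-! ### Moves on the odd sphere -/

/-- The unit sphere of `ℂ ^ (n + 1)`. -/
abbrev Sph (n : ℕ) : Type := Metric.sphere (0 : EuclideanSpace ℂ (Fin (n + 1))) 1

namespace Sph

variable {n : ℕ}

theorem norm_coe (z : Sph n) : ‖(z : EuclideanSpace ℂ (Fin (n + 1)))‖ = 1 := by
  simp

/-- Multiplication by `exp (i θ)`. -/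
noncomputable def rot (θ : ℝ) (z : Sph n) : Sph n :=
  ⟨Complex.exp (θ * Complex.I) • (z : EuclideanSpace ℂ (Fin (n + 1))), by
    simp [norm_smul, Complex.norm_exp_ofReal_mul_I]⟩

theorem coe_rot (θ : ℝ) (z : Sph n) :
    (rot θ z : EuclideanSpace ℂ (Fin (n + 1))) = Complex.exp (θ * Complex.I) • z.1 := rfl

theorem rot_rot (θ θ' : ℝ) (z : Sph n) : rot θ (rot θ' z) = rot (θ + θ') z := by
  ext1
  simp only [coe_rot, smul_smul, ← Complex.exp_add]
  congr 2; push_cast; ring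

theorem rot_zero : (rot 0 : Sph n → Sph n) = id := by
  funext z; ext1; simp [coe_rot]

theorem rot_iter (θ : ℝ) (t : ℕ) : (rot θ : Sph n → Sph n)^[t] = rot (t * θ) := by
  induction t with
  | zero => simp [rot_zero]
  | succ t ih =>
    rw [Function.iterate_succ, ih]
    funext z
    rw [Function.comp_apply, rot_rot]
    congr 1; push_cast; ring

theorem rot_two_pi : (rot (2 * Real.pi) : Sph n → Sph n) = id := by
  funext z; ext1
  rw [coe_rot]
  push_cast
  rw [Complex.exp_two_pi_mul_I, one_smul, id]

theorem dist_rot (θ : ℝ) (z w : Sph n) : dist (rot θ z) (rot θ w) = dist z w := by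
  rw [Subtype.dist_eq, Subtype.dist_eq, coe_rot, coe_rot, dist_eq_norm, ← smul_sub, norm_smul,
    Complex.norm_exp_ofReal_mul_I, one_mul, dist_eq_norm]

/-- The subsphere of points whose coordinates of index above `j` vanish. -/
def W (j : ℕ) : Set (Sph n) := {z | ∀ i : Fin (n + 1), j < i → z.1 i = 0}

/-- A standard basis vector, with the index truncated to the admissible range. -/
noncomputable def basis (j : ℕ) : Sph n :=
  ⟨EuclideanSpace.single ⟨min j n, by omega⟩ 1, by simp⟩

theorem basis_mem {j : ℕ} (hj : j ≤ n) : (basis j : Sph n) ∈ W j := by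
  intro i hi
  have : i ≠ ⟨min j n, by omega⟩ := by
    intro h
    rw [h] at hi
    simp [hj] at hi
  simp [basis, this]

theorem W_mono : Monotone (W : ℕ → Set (Sph n)) :=
  fun _ _ h _ hz i hi => hz i (lt_of_le_of_lt h hi)

theorem W_top : (W n : Set (Sph n)) = Set.univ :=
  Set.eq_univ_of_forall fun _ i hi => absurd i.2 (by omega)

/-- The great-circle arc from `z` to the basis vector `j`. -/
noncomputable def arc (j : ℕ) (θ : ℝ) (z : Sph n) : EuclideanSpace ℂ (Fin (n + 1)) :=
  ((Real.cos θ : ℝ) : ℂ) • z.1 + ((Real.sin θ : ℝ) : ℂ) • (basis j : Sph n).1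

theorem norm_arc {j : ℕ} (hj : j < n) (θ : ℝ) {z : Sph n} (hz : z ∈ W j) :
    ‖arc (j + 1) θ z‖ = 1 := by
  have h0 : z.1 ⟨min (j + 1) n, by omega⟩ = 0 := hz _ (by simp; omega)
  have hin : inner ℂ (((Real.cos θ : ℝ) : ℂ) • z.1)
      (((Real.sin θ : ℝ) : ℂ) • (basis (j + 1) : Sph n).1) = 0 := by
    rw [inner_smul_left, inner_smul_right]
    simp [basis, EuclideanSpace.inner_single_right, h0]
  have := norm_add_sq_eq_norm_sq_add_norm_sq_of_inner_eq_zero _ _ hin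
  rw [← arc, norm_smul, norm_smul, norm_coe, norm_coe, Complex.norm_real, Complex.norm_real,
    mul_one, mul_one, Real.norm_eq_abs, Real.norm_eq_abs, abs_mul_abs_self, abs_mul_abs_self]
    at this
  have h1 := Real.cos_sq_add_sin_sq θ
  nlinarith [norm_nonneg (arc (j + 1) θ z)]

/-- Times of the discretised cone. -/
noncomputable def ang (M t : ℕ) : ℝ := min ((t : ℝ) / M) 1 * (Real.pi / 2)

open Classical in
/-- The discretised cone homotopy; it is meaningful only on `W j` for `j < n`, and elsewhere it
jumps to the pole at once. -/
noncomputable def cone (M j t : ℕ) (z : Sph n) : Sph n :=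
  if t = 0 then z else
    if h : t < M ∧ j < n ∧ z ∈ W j then
      ⟨arc (j + 1) (ang M t) z, by simpa using norm_arc h.2.1 _ h.2.2⟩
    else basis (j + 1)

theorem coe_cone {M : ℕ} (hM : 0 < M) {j : ℕ} (hj : j < n) (t : ℕ) {z : Sph n} (hz : z ∈ W j) :
    (cone M j t z).1 = arc (j + 1) (ang M t) z := by
  unfold cone
  split_ifs with h1 h2
  · subst h1; simp [arc, ang]
  · rfl
  · have hMt : (1 : ℝ) ≤ t / M := by
      rw [le_div_iff₀ (by exact_mod_cast hM), one_mul]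
      exact_mod_cast not_lt.1 fun h => h2 ⟨h, hj, hz⟩
    simp [arc, ang, min_eq_right hMt]

/-- The moves on the sphere with `M` steps for each generator. -/
noncomputable def moves (n m M : ℕ) (hm : 0 < m) (hM : 0 < M) : CellMoves (Sph n) m M where
  g := rot (2 * Real.pi / (m * M))
  cone := cone M
  pole j := basis (j + 1)
  iter := by
    rw [rot_iter, ← rot_two_pi]
    congr 1
    have : (m : ℝ) ≠ 0 := by positivity
    have : (M : ℝ) ≠ 0 := by positivity
    push_cast; field_simp
  cone_zero j := by funext z; simp [cone]
  cone_last j z := by simp [cone, hM.ne']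

theorem moves_ζ {m M : ℕ} (hm : 0 < m) (hM : 0 < M) :
    (moves n m M hm hM).ζ = rot (2 * Real.pi / m) := by
  change (rot (2 * Real.pi / (m * M)))^[M] = _
  rw [rot_iter]
  congr 1
  have : (m : ℝ) ≠ 0 := by positivity
  have : (M : ℝ) ≠ 0 := by positivity
  field_simp

theorem abs_ang_sub {M : ℕ} (t : ℕ) : |ang M t - ang M (t + 1)| ≤ Real.pi / 2 / M := by
  rw [ang, ang, ← sub_mul, abs_mul, abs_of_pos (by positivity : 0 < Real.pi / 2)]
  have h : |min ((t : ℝ) / M) 1 - min (((t + 1 : ℕ) : ℝ) / M) 1| ≤ 1 / M := by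
    refine (abs_min_sub_min_le_max _ _ _ _).trans ?_
    simp only [sub_self, abs_zero]
    refine max_le ?_ (by positivity)
    rw [← sub_div, abs_div]
    simp
  calc _ ≤ 1 / (M : ℝ) * (Real.pi / 2) := by gcongr
    _ = _ := by ring

theorem moves_geom {m M : ℕ} (hm : 0 < m) (hM : 0 < M) :
    (moves n m M hm hM).Geom W n (2 * Real.pi / M) where
  δ_nonneg := by positivity
  mono := W_mono
  g_mem j z hz i hi := by
    change (rot _ z).1 i = 0
    simp [coe_rot, hz i hi]
  g_le z w := (dist_rot _ z w).le
  g_step z := by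
    change dist z (rot _ z) ≤ _
    rw [dist_comm, Subtype.dist_eq, coe_rot, dist_eq_norm]
    have : Complex.exp ((2 * Real.pi / (m * M) : ℝ) * Complex.I) • z.1 - z.1 =
        (Complex.exp (Complex.I * (2 * Real.pi / (m * M) : ℝ)) - 1) • z.1 := by
      rw [sub_smul, one_smul, mul_comm]
    rw [this, norm_smul, norm_coe, mul_one]
    refine (Real.norm_exp_I_mul_ofReal_sub_one_le).trans ?_
    rw [Real.norm_eq_abs, abs_of_nonneg (by positivity)]
    have : (1 : ℝ) ≤ m := by exact_mod_cast hm
    gcongr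
    nlinarith [show (0 : ℝ) < M by exact_mod_cast hM]
  cone_mem j hj t z hz i hi := by
    change (cone M j t z).1 i = 0
    rw [coe_cone hM hj t hz]
    have := basis_mem (n := n) (show j + 1 ≤ n by omega) i hi
    simp [arc, hz i (by omega), this]
  cone_le j hj t z hz w hw := by
    change dist (cone M j t z) (cone M j t w) ≤ _
    rw [Subtype.dist_eq, coe_cone hM hj t hz, coe_cone hM hj t hw, Subtype.dist_eq, arc, arc,
      dist_add_right, dist_eq_norm, ← smul_sub, norm_smul, Complex.norm_real, dist_eq_norm]
    exact mul_le_of_le_one_left (norm_nonneg _) (Real.abs_cos_le_one _)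
  cone_step j hj t z hz := by
    change dist (cone M j t z) (cone M j (t + 1) z) ≤ _
    rw [Subtype.dist_eq, coe_cone hM hj t hz, coe_cone hM hj _ hz, arc, arc, dist_eq_norm]
    have e : ∀ (a b a' b' : ℂ) (x y : EuclideanSpace ℂ (Fin (n + 1))),
        a • x + b • y - (a' • x + b' • y) = (a - a') • x + (b - b') • y := by
      intros; module
    rw [e]
    refine (norm_add_le _ _).trans ?_
    rw [norm_smul, norm_smul, norm_coe, norm_coe, mul_one, mul_one, ← Complex.ofReal_sub,
      ← Complex.ofReal_sub, Complex.norm_real, Complex.norm_real, Real.norm_eq_abs,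
      Real.norm_eq_abs]
    have h := abs_ang_sub (M := M) t
    have h1 : |Real.cos (ang M t) - Real.cos (ang M (t + 1))| ≤ |ang M t - ang M (t + 1)| := 
      Real.abs_cos_sub_cos_le _ _
    have h2 : |Real.sin (ang M t) - Real.sin (ang M (t + 1))| ≤ |ang M t - ang M (t + 1)| := 
      Real.abs_sin_sub_sin_le _ _
    have h3 : Real.pi / 2 / M ≤ Real.pi / M := by
      have := Real.pi_pos
      gcongr; linarith
    calc _ ≤ Real.pi / M + Real.pi / M := by linarith
      _ = _ := by ring

end Sph

/-! ### The covering of the lens space by the sphere -/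

namespace Sph

variable {n m : ℕ}

/-- The projection of the sphere onto the lens space. -/
noncomputable def proj (m n : ℕ) (z : Sph n) : LensSpace m n := Quotient.mk (lensSetoid m n) z

/-- The generator of the action of the `m`-th roots of unity on the sphere. -/
noncomputable def om (m : ℕ) : Sph n → Sph n := rot (2 * Real.pi / m)

theorem continuous_rot (θ : ℝ) : Continuous (rot θ : Sph n → Sph n) := by
  unfold rot
  fun_prop

theorem coe_om_iter [NeZero m] (t : ℕ) (z : Sph n) :
    (((om m)^[t] z : Sph n) : EuclideanSpace ℂ (Fin (n + 1))) =
      Complex.exp (2 * Real.pi * Complex.I / m) ^ t • z.1 := by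
  rw [om, rot_iter, coe_rot, ← Complex.exp_nat_mul]
  congr 2; push_cast; ring

theorem isPrimitiveRoot_om (m : ℕ) [NeZero m] :
    IsPrimitiveRoot (Complex.exp (2 * Real.pi * Complex.I / m)) m :=
  Complex.isPrimitiveRoot_exp m (NeZero.ne m)

theorem proj_eq_iff [NeZero m] {z w : Sph n} :
    proj m n z = proj m n w ↔ ∃ t : ℕ, w = (om m)^[t] z := by
  have hp := isPrimitiveRoot_om m
  constructor
  · intro h
    obtain ⟨ζ, hζ, e⟩ : (lensSetoid m n).r z w := Quotient.exact h
    obtain ⟨t, -, ht⟩ := hp.eq_pow_of_pow_eq_one (ξ := (ζ : ℂ))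
      (by rw [← Units.val_pow_eq_pow_val, hζ, Units.val_one])
    refine ⟨t, Subtype.ext ?_⟩
    rw [coe_om_iter, ht, e]; rfl
  · rintro ⟨t, rfl⟩
    refine Quotient.sound (s := lensSetoid m n) (?_ : (lensSetoid m n).r _ _)
    obtain ⟨u, hu⟩ : ∃ u : ℂˣ, (u : ℂ) = Complex.exp (2 * Real.pi * Complex.I / m) :=
      ⟨Units.mk0 _ (Complex.exp_ne_zero _), rfl⟩
    rw [← hu] at hp
    refine ⟨u ^ t, ?_, ?_⟩
    · ext1
      rw [← pow_mul, mul_comm, pow_mul, Units.val_pow_eq_pow_val, Units.val_pow_eq_pow_val,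
        hp.pow_eq_one, one_pow, Units.val_one]
    · rw [coe_om_iter, ← hu]; rfl

theorem om_iter_inj [NeZero m] {t t' : ℕ} {z : Sph n} (h : (om m)^[t] z = (om m)^[t'] z) :
    (t : ZMod m) = t' := by
  have h' := congrArg Subtype.val h
  rw [coe_om_iter, coe_om_iter] at h'
  have hz : z.1 ≠ 0 := fun h0 => by simpa [h0] using norm_coe z
  have := smul_left_injective ℂ hz h'
  rw [ZMod.natCast_eq_natCast_iff]
  have hp := isPrimitiveRoot_om m
  rwa [(hp.isOfFinOrder (NeZero.ne m)).pow_eq_pow_iff_modEq, ← hp.eq_orderOf] at this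

theorem om_iter_congr [NeZero m] {t t' : ℕ} (h : (t : ZMod m) = t') (z : Sph n) :
    (om m)^[t] z = (om m)^[t'] z := by
  ext1
  rw [coe_om_iter, coe_om_iter]
  congr 1
  rw [ZMod.natCast_eq_natCast_iff] at h
  have hp := isPrimitiveRoot_om m
  rwa [(hp.isOfFinOrder (NeZero.ne m)).pow_eq_pow_iff_modEq, ← hp.eq_orderOf]

theorem proj_om [NeZero m] (z : Sph n) : proj m n (om m z) = proj m n z :=
  (proj_eq_iff.2 ⟨1, rfl⟩).symm

theorem isQuotientMap_proj : Topology.IsQuotientMap (proj m n) := isQuotientMap_quotient_mk'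

theorem isCoveringMap_proj [NeZero m] : IsCoveringMap (proj m n) := by
  let G := rootsOfUnity m ℂ
  let _ : MulAction G (Sph n) :=
    { smul := fun g z => ⟨(g : ℂˣ) • z.1, by
        have : ‖((g : ℂˣ) : ℂ)‖ = 1 :=
          Complex.norm_eq_one_of_pow_eq_one
            (by rw [← Units.val_pow_eq_pow_val, (mem_rootsOfUnity _ _).1 g.2, Units.val_one])
            (NeZero.ne m)
        rw [Units.smul_def, mem_sphere_zero_iff_norm, norm_smul, this, norm_coe, one_mul]⟩
      one_smul := fun z => Subtype.ext (one_smul _ _)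
      mul_smul := fun g h z => Subtype.ext (mul_smul _ _ _) }
  have hs : ∀ (g : G) (z : Sph n), (g • z).1 = ((g : ℂˣ) : ℂ) • z.1 := fun _ _ => rfl
  have : ContinuousConstSMul G (Sph n) :=
    ⟨fun g => Continuous.subtype_mk (continuous_const.smul continuous_subtype_val) _⟩
  have : IsCancelSMul G (Sph n) := ⟨fun g h z e => by
    have e' := congrArg Subtype.val e
    rw [hs, hs] at e'
    have hz : z.1 ≠ 0 := fun h0 => by simpa [h0] using norm_coe z
    exact Subtype.ext (Units.ext (smul_left_injective ℂ hz e'))⟩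
  refine (isQuotientMap_proj.isQuotientCoveringMap_of_properlyDiscontinuousSMul (G := G)
    ?_).isCoveringMap
  intro z w
  constructor
  · intro h
    obtain ⟨ζ, hζ, e⟩ : (lensSetoid m n).r w z := Quotient.exact h.symm
    exact ⟨⟨ζ, (mem_rootsOfUnity _ _).2 hζ⟩, Subtype.ext e.symm⟩
  · rintro ⟨g, rfl⟩
    exact (Quotient.sound (s := lensSetoid m n)
      (show (lensSetoid m n).r _ _ from ⟨g, (mem_rootsOfUnity _ _).1 g.2, rfl⟩)).symm

/-! ### The position of a point in its fibre -/

open Classical in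
/-- For two points of the same fibre, the class of the power of the generator moving the first
to the second; zero (a junk value) for points of different fibres. -/
noncomputable def gap (m : ℕ) (z w : Sph n) : ZMod m :=
  if h : ∃ t : ℕ, w = (om m)^[t] z then (h.choose : ZMod m) else 0

theorem gap_iter [NeZero m] (t : ℕ) (z : Sph n) : gap m z ((om m)^[t] z) = t := by
  have h : ∃ t' : ℕ, (om m)^[t] z = (om m)^[t'] z := ⟨t, rfl⟩
  rw [gap, dif_pos h]
  exact om_iter_inj h.choose_spec.symm

theorem om_iter_gap [NeZero m] {z w : Sph n} (h : proj m n z = proj m n w) :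
    (om m)^[(gap m z w).val] z = w := by
  obtain ⟨t, rfl⟩ := proj_eq_iff.1 h
  rw [gap_iter]
  exact om_iter_congr (by simp) z

theorem gap_eq_iff [NeZero m] {z w : Sph n} (h : proj m n z = proj m n w) (c : ZMod m) :
    gap m z w = c ↔ w = (om m)^[c.val] z := by
  constructor
  · rintro rfl; exact (om_iter_gap h).symm
  · rintro rfl; rw [gap_iter]; simp

theorem gap_right [NeZero m] {z w : Sph n} (h : proj m n z = proj m n w) (t : ℕ) :
    gap m z ((om m)^[t] w) = gap m z w + t := by
  obtain ⟨s, rfl⟩ := proj_eq_iff.1 h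
  rw [← Function.iterate_add_apply, gap_iter, gap_iter]
  push_cast; ring

theorem gap_left [NeZero m] {z w : Sph n} (h : proj m n z = proj m n w) (t : ℕ) :
    gap m ((om m)^[t] z) w = gap m z w - t := by
  have h' : proj m n ((om m)^[t] z) = proj m n w := by rw [← h]; exact (proj_eq_iff.2 ⟨t, rfl⟩).symm
  obtain ⟨s, rfl⟩ := proj_eq_iff.1 h'
  rw [gap_iter, ← Function.iterate_add_apply, gap_iter]
  push_cast; ring

theorem continuous_gap [NeZero m] {T : Type*} [TopologicalSpace T] {z w : T → Sph n}
    (hz : Continuous z) (hw : Continuous w) (h : ∀ x, proj m n (z x) = proj m n (w x)) :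
    Continuous fun x => gap m (z x) (w x) := by
  rw [continuous_iff_isClosed]
  intro s _
  have : (fun x => gap m (z x) (w x)) ⁻¹' s = ⋃ c ∈ s, {x | w x = (om m)^[c.val] (z x)} := by
    ext x
    simp only [Set.mem_preimage, Set.mem_iUnion, Set.mem_ofPred_eq, ← gap_eq_iff (h x)]
    simp
  rw [this]
  refine Set.Finite.isClosed_biUnion s.toFinite fun c _ => ?_
  exact isClosed_eq hw (((continuous_rot _).iterate _).comp hz)

end Sph

/-! ### The lower bound -/

namespace Sph

open CellMoves

variable {n m k : ℕ}

/-- The product of `k` copies of the covering projection. -/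
noncomputable def projk (m n k : ℕ) (v : Fin k → Sph n) : Fin k → LensSpace m n :=
  fun l => proj m n (v l)

theorem continuous_projk : Continuous (projk m n k) :=
  continuous_pi fun l => isQuotientMap_proj.continuous.comp (continuous_apply l)

theorem projk_onC [NeZero m] (l : Fin k) (v : Fin k → Sph n) :
    projk m n k (onC l (om m) v) = projk m n k v := by
  funext l'
  by_cases h : l' = l
  · subst h; simp [projk, onC, proj_om]
  · simp [projk, onC, h]

/-- A section of `π_k` over `U` yields, by lifting its paths to the sphere, a locally constant
function on the preimage of `U` whose `l`-th component measures the displacement of the `l`-th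
coordinate from the lifted path; it is equivariant up to simultaneous translation of all
components. -/
theorem exists_shift [NeZero m] (hk : 0 < k) {U : Set (Fin k → LensSpace m n)}
    (hU : HasSec k U) :
    ∃ A : projk m n k ⁻¹' U → Fin k → ZMod m, Continuous A ∧
      ∀ (x x' : projk m n k ⁻¹' U) (l : Fin k), x'.1 = onC l (om m) x.1 →
        ∃ c, ∀ l', A x' l' = A x l' + (if l' = l then 1 else 0) + c := by
  obtain ⟨s, hs⟩ := hU
  set T := projk m n k ⁻¹' U
  let z : Fin k := ⟨0, hk⟩
  let P : C(T, U) := ⟨fun x => ⟨projk m n k x.1, x.2⟩,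
    (continuous_projk.comp continuous_subtype_val).subtype_mk _⟩
  let H : C(unitInterval × T, LensSpace m n) :=
    ⟨fun q => s (P q.2) q.1, by fun_prop⟩
  let f : C(T, Sph n) := ⟨fun x => x.1 z, (continuous_apply z).comp continuous_subtype_val⟩
  have hp := isCoveringMap_proj (m := m) (n := n)
  have H0 : ∀ a, H (0, a) = proj m n (f a) := by
    intro a
    have := congrFun (hs (P a)) z
    simp only [pik, z, Nat.cast_zero, zero_div, Set.projIcc_left] at this
    exact this
  let τ : Fin k → unitInterval := fun l => Set.projIcc 0 1 zero_le_one ((l : ℝ) / ((k : ℝ) - 1))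
  let G := hp.liftHomotopy H f H0
  have hG : ∀ t x, proj m n (G (t, x)) = H (t, x) := fun t x =>
    congrFun (hp.liftHomotopy_lifts H f H0) (t, x)
  have hG0 : ∀ x, G (0, x) = x.1 z := fun x => hp.liftHomotopy_zero H f H0 x
  have hfib : ∀ (x : T) l, proj m n (G (τ l, x)) = proj m n (x.1 l) := fun x l => by
    rw [hG]; exact congrFun (hs (P x)) l
  refine ⟨fun x l => gap m (G (τ l, x)) (x.1 l), ?_, ?_⟩
  · exact continuous_pi fun l => continuous_gap (by fun_prop)
      ((continuous_apply l).comp continuous_subtype_val) fun x => hfib x l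
  · intro x x' l hx
    have hP : P x' = P x := Subtype.ext (by
      change projk m n k x'.1 = projk m n k x.1
      rw [hx, projk_onC])
    -- the lifts at `x` and `x'` differ by the deck transformation that relates their origins
    obtain ⟨t, ht⟩ : ∃ t : ℕ, x'.1 z = (om m)^[t] (x.1 z) := by
      by_cases h : z = l
      · exact ⟨1, by rw [hx, ← h]; simp [onC]⟩
      · exact ⟨0, by rw [hx]; simp [onC, h]⟩
    have hGx : (fun a => G (a, x')) = fun a => (om m)^[t] (G (a, x)) := by
      refine hp.eq_of_comp_eq (by fun_prop)
        (((continuous_rot _).iterate t).comp (by fun_prop)) ?_ 0 ?_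
      · funext a
        simp only [Function.comp_apply]
        rw [← proj_eq_iff.2 ⟨t, rfl⟩, hG, hG]
        change s (P x') a = s (P x) a
        rw [hP]
      · simp only [hG0, ht]
    refine ⟨-t, fun l' => ?_⟩
    simp only
    rw [congrFun hGx (τ l')]
    by_cases h : l' = l
    · subst h
      have : x'.1 l' = (om m)^[1] (x.1 l') := by rw [hx]; simp [onC]
      have h2 : proj m n ((om m)^[t] (G (τ l', x))) = proj m n (x.1 l') := by
        rw [← hfib x l']; exact (proj_eq_iff.2 ⟨t, rfl⟩).symm
      rw [this, gap_right h2, gap_left (hfib x l'), if_pos rfl]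
      push_cast; ring
    · have : x'.1 l' = x.1 l' := by rw [hx]; simp [onC, h]
      rw [this, gap_left (hfib x l'), if_neg h]
      ring

/-- An equivariant function on the sphere; it cannot be chosen continuous. -/
theorem exists_equivariant (m n : ℕ) [NeZero m] :
    ∃ a : Sph n → ZMod m, ∀ z, a (om m z) = a z + 1 := by
  refine ⟨fun z => gap m (Quotient.out (s := lensSetoid m n) (proj m n z)) z, fun z => ?_⟩
  simp only
  rw [proj_om]
  have h : proj m n (Quotient.out (s := lensSetoid m n) (proj m n z)) = proj m n z :=
    Quotient.out_eq (s := lensSetoid m n) _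
  simpa using gap_right h 1

/-- Every covering has at least `k (2n + 1)` members: the locally constant functions attached to
a smaller covering would make the product class of degree `k (2n + 1) - 1` vanish on small
simplices. -/
theorem lower_bound (hk : 2 ≤ k) (hm : 2 ≤ m)
    (hdvd : ¬ (m ∣ (Nat.choose (2 * n) n) ^ (k / 2))) {r : ℕ}
    (hr : TCCoverAt (LensSpace m n) k r) : k * (2 * n + 1) ≤ r := by
  by_contra! hlt
  obtain ⟨U, hUo, hUc, hUs⟩ := hr
  have : NeZero m := ⟨by omega⟩
  choose A hAc hAe using fun i => exists_shift (by omega) (hUs i)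
  obtain ⟨a, ha⟩ := exists_equivariant m n
  classical
  let α : ℕ → Fin k × Fin k → (Fin k → Sph n) → ZMod m := fun j p v =>
    if h : ∃ hj : j < r, projk m n k v ∈ U ⟨j, hj⟩ then
      A ⟨j, h.1⟩ ⟨v, h.2⟩ p.1 - A ⟨j, h.1⟩ ⟨v, h.2⟩ p.2
    else a (v p.1) - a (v p.2)
  have hchar : ∀ j p l v, α j p (onC l (om m) v) = α j p v + chi p l := by
    intro j p l v
    by_cases h : ∃ hj : j < r, projk m n k v ∈ U ⟨j, hj⟩
    · have h' : ∃ hj : j < r, projk m n k (onC l (om m) v) ∈ U ⟨j, hj⟩ := by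
        rwa [projk_onC]
      simp only [α, dif_pos h, dif_pos h']
      obtain ⟨c, hc⟩ := hAe ⟨j, h.1⟩ ⟨v, h.2⟩ ⟨_, h'.2⟩ l rfl
      rw [hc, hc, chi]
      simp only [eq_comm (a := l)]
      ring
    · have h' : ¬ ∃ hj : j < r, projk m n k (onC l (om m) v) ∈ U ⟨j, hj⟩ := by
        rwa [projk_onC]
      simp only [α, dif_neg h, dif_neg h']
      have key : ∀ l', a (onC l (om m) v l') = a (v l') + if l = l' then 1 else 0 := by
        intro l'
        by_cases e : l = l'
        · subst e; simp [onC, ha]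
        · simp [onC, Ne.symm e, e]
      rw [key, key, chi]
      ring
  -- the pieces on which one of the functions is constant form an open cover
  let c : Fin r × (Fin k → ZMod m) → Set (Fin k → Sph n) := fun q =>
    Subtype.val '' (A q.1 ⁻¹' {q.2})
  have hco : ∀ q, IsOpen (c q) := fun q =>
    ((hUo q.1).preimage continuous_projk).isOpenMap_subtype_val _
      ((isOpen_discrete _).preimage (hAc q.1))
  have hcc : (Set.univ : Set (Fin k → Sph n)) ⊆ ⋃ q, c q := by
    intro v _
    have : projk m n k v ∈ ⋃ i, U i := by rw [hUc]; trivial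
    obtain ⟨i, hi⟩ := Set.mem_iUnion.1 this
    exact Set.mem_iUnion.2 ⟨(i, A i ⟨v, hi⟩), ⟨v, hi⟩, rfl, rfl⟩
  obtain ⟨δ, hδ, hleb⟩ := lebesgue_number_lemma_of_metric isCompact_univ hco hcc
  let z : Fin k := ⟨0, by omega⟩
  let J : Fin k → ℕ := fun l => 2 * n + if l ∈ (List.finRange k).erase z then 1 else 0
  set N : ℕ := ((List.finRange k).map J).sum
  obtain ⟨M, hM⟩ := exists_nat_gt (N * (2 * Real.pi) / (δ / 2))
  have hM0 : 0 < M := by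
    have : (0 : ℝ) < M := lt_of_le_of_lt (by positivity) hM
    exact_mod_cast this
  have hm0 : 0 < m := by omega
  have hζ : ∀ (l : Fin k), onC l (moves n m M hm0 hM0).ζ = onC l (om m) := fun l => by
    rw [moves_ζ]; rfl
  refine hdvd (dvd_choose (moves n m M hm0 hM0) (fun _ => basis 0) (α := α)
    (fun j p l v => by rw [hζ]; exact hchar j p l v) n hk z rfl fun f hf => ?_)
  refine Small.ev (moves_geom hm0 hM0) (List.finRange k) (List.nodup_finRange k) J
    (K := fun _ => n) (ε := δ / 2) (f := f) ?_ ?_ (fun _ => basis 0)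
    (fun _ => basis_mem (Nat.zero_le _)) ?_
  · intro L hL0 _ hL
    obtain ⟨v, L', rfl⟩ := List.exists_cons_of_ne_nil hL0
    obtain ⟨q, hq⟩ := hleb v trivial
    have hLq : ∀ w ∈ v :: L', w ∈ c q := by
      intro w hw
      refine hq (Metric.mem_ball.2 (lt_of_le_of_lt ((dist_pi_le_iff (by positivity)).2
        fun l => hL w hw v (by simp) l) (by linarith)))
    refine hf _ ⟨q.1, by have := q.1.2; omega, fun p w hw w' hw' => ?_⟩
    have hα : ∀ w ∈ c q, α q.1 p w = q.2 p.1 - q.2 p.2 := by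
      rintro _ ⟨x, hx, rfl⟩
      have h : ∃ hj : (q.1 : ℕ) < r, projk m n k x.1 ∈ U ⟨q.1, hj⟩ := ⟨q.1.2, x.2⟩
      simp only [α, dif_pos h]
      rw [← (show A q.1 x = q.2 from hx)]
    rw [hα w (hLq w hw), hα w' (hLq w' hw')]
  · intro l _
    have : J l ≤ 2 * n + 1 := by simp only [J]; split_ifs <;> omega
    constructor <;> omega
  · rw [div_lt_iff₀ (by positivity)] at hM
    have hM' : (0 : ℝ) < M := by exact_mod_cast hM0
    rw [← mul_div_assoc, div_le_iff₀ hM']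
    linarith

end Sph

/-! ### Sections over disjoint unions and over quotients -/

theorem HasSec.iUnion {X : Type*} [TopologicalSpace X] {k : ℕ} {ι : Type*}
    {O : ι → Set (Fin k → X)} (ho : ∀ i, IsOpen (O i)) (hd : ∀ i j u, u ∈ O i → u ∈ O j → i = j)
    (h : ∀ i, HasSec k (O i)) : HasSec k (⋃ i, O i) := by
  choose s hs using h
  let R : ι → Set (⋃ i, O i) := fun i => Subtype.val ⁻¹' O i
  let φ : ∀ i, C(R i, C(unitInterval, X)) := fun i =>
    (s i).comp ⟨fun x => ⟨x.1.1, x.2⟩, by fun_prop⟩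
  have hφ : ∀ i j x (hxi : x ∈ R i) (hxj : x ∈ R j), φ i ⟨x, hxi⟩ = φ j ⟨x, hxj⟩ := by
    intro i j x hxi hxj
    obtain rfl := hd i j x.1 hxi hxj
    rfl
  have hR : ∀ x, ∃ i, R i ∈ nhds x := fun x => by
    obtain ⟨i, hi⟩ := Set.mem_iUnion.1 x.2
    exact ⟨i, ((ho i).preimage continuous_subtype_val).mem_nhds hi⟩
  refine ⟨ContinuousMap.liftCover R φ hφ hR, fun u => ?_⟩
  obtain ⟨i, hi⟩ := Set.mem_iUnion.1 u.2
  have : ContinuousMap.liftCover R φ hφ hR u = φ i ⟨u, hi⟩ :=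
    ContinuousMap.liftCover_coe (S := R) (hφ := hφ) (hS := hR) ⟨u, hi⟩
  rw [this]
  exact hs i ⟨u.1, hi⟩

namespace Sph

variable {n m k : ℕ}

theorem isOpenMap_projk [NeZero m] : IsOpenMap (projk m n k) :=
  IsOpenMap.piMap (fun _ => isCoveringMap_proj.isOpenMap) (by simp [Filter.cofinite_eq_bot])

/-- A motion planner on an open set of tuples in the sphere whose values in the lens space only
depend on the projections of the tuples. -/
theorem hasSec_image [NeZero m] {Q : Set (Fin k → Sph n)} (hQ : IsOpen Q)
    (F : C(Q × unitInterval, LensSpace m n))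
    (hF : ∀ x y t, projk m n k x.1 = projk m n k y.1 → F (x, t) = F (y, t))
    (hk : ∀ x (l : Fin k),
      F (x, Set.projIcc 0 1 zero_le_one ((l : ℝ) / ((k : ℝ) - 1))) = proj m n (x.1 l)) :
    HasSec k (projk m n k '' Q) := by
  let q : C(Q, projk m n k '' Q) :=
    ⟨fun x => ⟨projk m n k x.1, x.1, x.2, rfl⟩,
      (continuous_projk.comp continuous_subtype_val).subtype_mk _⟩
  have hq : IsOpenQuotientMap q :=
    { surjective := by rintro ⟨_, x, hx, rfl⟩; exact ⟨⟨x, hx⟩, rfl⟩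
      continuous := q.continuous
      isOpenMap := (isOpenMap_projk.comp hQ.isOpenMap_subtype_val).subtype_mk _ }
  have hinv : ∀ x y, q x = q y → F.curry x = F.curry y := fun x y h =>
    ContinuousMap.ext fun t => hF x y t (congrArg Subtype.val h)
  refine ⟨hq.isQuotientMap.lift F.curry hinv, fun u => ?_⟩
  obtain ⟨x, rfl⟩ := hq.surjective u
  have : hq.isQuotientMap.lift F.curry hinv (q x) = F.curry x :=
    ContinuousMap.congr_fun (hq.isQuotientMap.lift_comp F.curry hinv) x
  rw [this]
  funext l
  exact hk x l

/-! ### The stratification of the power of the sphere -/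

theorem exists_ne_zero (z : Sph n) : ∃ i, z.1 i ≠ 0 := by
  by_contra! h
  have : z.1 = 0 := by ext i; exact h i
  simpa [this] using norm_coe z

open Classical in
/-- The index of the last nonzero coordinate. -/
noncomputable def top (z : Sph n) : Fin (n + 1) :=
  (Finset.univ.filter fun i => z.1 i ≠ 0).max' (by
    obtain ⟨i, hi⟩ := exists_ne_zero z
    exact ⟨i, by simpa using hi⟩)

theorem top_ne_zero (z : Sph n) : z.1 (top z) ≠ 0 := by
  classical
  have := Finset.max'_mem (Finset.univ.filter fun i => z.1 i ≠ 0) (by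
    obtain ⟨i, hi⟩ := exists_ne_zero z
    exact ⟨i, by simpa using hi⟩)
  have h2 := (Finset.mem_filter.1 this).2
  exact h2

theorem le_top {z : Sph n} {i : Fin (n + 1)} (h : z.1 i ≠ 0) : i ≤ top z := by
  classical
  exact Finset.le_max' _ _ (by simpa using h)

/-- The phase of a complex number. -/
noncomputable def phase (c : ℂ) : ℂ := c / (‖c‖ : ℂ)

theorem norm_phase {c : ℂ} (h : c ≠ 0) : ‖phase c‖ = 1 := by
  simp [phase, h]

theorem phase_ne_zero {c : ℂ} (h : c ≠ 0) : phase c ≠ 0 := by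
  simp [phase, h]

theorem phase_mul {u c : ℂ} (h : ‖u‖ = 1) : phase (u * c) = u * phase c := by
  simp [phase, h, mul_div_assoc]

theorem continuousAt_phase {c : ℂ} (h : c ≠ 0) : ContinuousAt phase c := by
  unfold phase
  have : (‖c‖ : ℂ) ≠ 0 := by simpa using h
  fun_prop (disch := assumption)

/-- The `m`-th power of the phase of the last nonzero coordinate. -/
noncomputable def ph (m : ℕ) (z : Sph n) : ℂ := phase (z.1 (top z)) ^ m

theorem om_iter_apply [NeZero m] (t : ℕ) (z : Sph n) (i : Fin (n + 1)) :
    ((om m)^[t] z).1 i = Complex.exp (2 * Real.pi * Complex.I / m) ^ t * z.1 i := by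
  rw [coe_om_iter]; rfl

theorem norm_root_pow (m : ℕ) [NeZero m] (t : ℕ) :
    ‖Complex.exp (2 * Real.pi * Complex.I / m) ^ t‖ = 1 := by
  rw [norm_pow, (isPrimitiveRoot_om m).norm'_eq_one (NeZero.ne m), one_pow]

theorem top_congr [NeZero m] {z w : Sph n} (h : proj m n z = proj m n w) : top z = top w := by
  obtain ⟨t, rfl⟩ := proj_eq_iff.1 h
  have hz : ∀ i, ((om m)^[t] z).1 i ≠ 0 ↔ z.1 i ≠ 0 := fun i => by
    simp [om_iter_apply, Complex.exp_ne_zero]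
  exact le_antisymm (le_top ((hz _).2 (top_ne_zero z))) (le_top ((hz _).1 (top_ne_zero _)))

theorem phase_iter [NeZero m] (t : ℕ) (z : Sph n) (i : Fin (n + 1)) :
    phase (((om m)^[t] z).1 i) =
      Complex.exp (2 * Real.pi * Complex.I / m) ^ t * phase (z.1 i) := by
  rw [om_iter_apply, phase_mul (norm_root_pow m t)]

theorem phase_pow_congr [NeZero m] {z w : Sph n} (h : proj m n z = proj m n w)
    (i : Fin (n + 1)) : phase (z.1 i) ^ m = phase (w.1 i) ^ m := by
  obtain ⟨t, rfl⟩ := proj_eq_iff.1 h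
  rw [phase_iter, mul_pow, ← pow_mul, mul_comm t, pow_mul, (isPrimitiveRoot_om m).pow_eq_one,
    one_pow, one_mul]

theorem ph_congr [NeZero m] {z w : Sph n} (h : proj m n z = proj m n w) : ph m z = ph m w := by
  rw [ph, ph, ← top_congr h, phase_pow_congr h]

open Classical in
/-- The number of distinct phases. -/
noncomputable def count (m : ℕ) (v : Fin k → Sph n) : ℕ :=
  (Finset.univ.image fun l => ph m (v l)).card

/-- The level of a tuple: an open cell of dimension `2 * i + 1` contributes `2 * i` for each entry,
and the position of the `k` phases relative to each other contributes at most `k - 1`. -/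
noncomputable def level (m : ℕ) (v : Fin k → Sph n) : ℕ :=
  2 * (∑ l, (top (v l) : ℕ)) + count m v - 1

open Classical in
/-- The combinatorial type of a tuple: the indices of the last nonzero coordinates, and the set
of those entries whose phase agrees with that of the entry `z`. -/
noncomputable def type (m : ℕ) (z : Fin k) (v : Fin k → Sph n) :
    (Fin k → Fin (n + 1)) × Finset (Fin k) :=
  (fun l => top (v l), Finset.univ.filter fun l => ph m (v l) = ph m (v z))

theorem level_congr [NeZero m] {v w : Fin k → Sph n} (h : projk m n k v = projk m n k w) :
    level m v = level m w := by
  have h' : ∀ l, proj m n (v l) = proj m n (w l) := congrFun h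
  simp only [level, count, fun l => top_congr (h' l), fun l => ph_congr (h' l)]

theorem type_congr [NeZero m] (z : Fin k) {v w : Fin k → Sph n}
    (h : projk m n k v = projk m n k w) : type m z v = type m z w := by
  have h' : ∀ l, proj m n (v l) = proj m n (w l) := congrFun h
  simp only [type, fun l => top_congr (h' l), fun l => ph_congr (h' l)]

theorem level_lt (hk : 0 < k) (v : Fin k → Sph n) : level m v < k * (2 * n + 1) := by
  have h1 : ∑ l, (top (v l) : ℕ) ≤ ∑ _l : Fin k, n :=
    Finset.sum_le_sum fun l _ => Nat.lt_succ_iff.1 (top (v l)).2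
  have h2 : count m v ≤ k := Finset.card_image_le.trans (by simp)
  simp at h1
  unfold level
  rw [mul_add, mul_one, mul_left_comm]
  omega

/-- On the set of tuples of a given level the type is locally constant: when the last nonzero
index of `c` entries jumps up, the number of distinct phases drops by at most `c`, while twice
the sum of the indices grows by at least `2 c`. -/
theorem eventually_type (m : ℕ) (z : Fin k) (v : Fin k → Sph n) :
    ∀ᶠ w in nhds v, level m w = level m v → type m z w = type m z v := by
  classical
  have hc : ∀ l, Continuous fun w : Fin k → Sph n => (w l).1 (top (v l)) := fun l => by
    fun_prop
  have e1 : ∀ᶠ w in nhds v, ∀ l, (w l).1 (top (v l)) ≠ 0 := Filter.eventually_all.2 fun l =>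
    (hc l).continuousAt.eventually_ne (top_ne_zero (v l))
  have hcp : ∀ l, ContinuousAt (fun w : Fin k → Sph n => phase ((w l).1 (top (v l))) ^ m) v :=
    fun l => (ContinuousAt.comp (f := fun w : Fin k → Sph n => (w l).1 (top (v l)))
      (continuousAt_phase (top_ne_zero (v l))) (hc l).continuousAt).pow m
  have e2 : ∀ᶠ w in nhds v, ∀ l l', ph m (v l) ≠ ph m (v l') →
      phase ((w l).1 (top (v l))) ^ m ≠ phase ((w l').1 (top (v l'))) ^ m :=
    Filter.eventually_all.2 fun l => Filter.eventually_all.2 fun l' => by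
      by_cases h : ph m (v l) = ph m (v l')
      · exact Filter.Eventually.of_forall fun w h' => absurd h h'
      · have : ∀ᶠ w in nhds v, phase ((w l).1 (top (v l))) ^ m ≠
            phase ((w l').1 (top (v l'))) ^ m := ((hcp l).ne_iff_eventually_ne (hcp l')).1 h
        filter_upwards [this] with w hw _ using hw
  filter_upwards [e1, e2] with w h1 h2 hlev
  have htop : ∀ l, top (v l) ≤ top (w l) := fun l => le_top (h1 l)
  set B := Finset.univ.filter fun l => top (w l) ≠ top (v l) with hB
  have hphw : ∀ l ∉ B, ph m (w l) = phase ((w l).1 (top (v l))) ^ m := fun l hl => by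
    have : top (w l) = top (v l) := by simpa [hB] using hl
    rw [ph, this]
  have hinj : ∀ l ∉ B, ∀ l' ∉ B, ph m (w l) = ph m (w l') → ph m (v l) = ph m (v l') := by
    intro l hl l' hl' h
    by_contra hne
    exact h2 l l' hne (by rw [← hphw l hl, ← hphw l' hl', h])
  let f : ℂ → ℂ := fun x => if h : ∃ l, l ∉ B ∧ ph m (w l) = x then ph m (v h.choose) else 0
  have hf : ∀ l ∉ B, f (ph m (w l)) = ph m (v l) := by
    intro l hl
    have h : ∃ l', l' ∉ B ∧ ph m (w l') = ph m (w l) := ⟨l, hl, rfl⟩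
    simp only [f, dif_pos h]
    exact hinj _ h.choose_spec.1 _ hl h.choose_spec.2
  have hsub : (Finset.univ.image fun l => ph m (v l)) ⊆
      (Finset.univ.image fun l => ph m (w l)).image f ∪ B.image fun l => ph m (v l) := by
    intro x hx
    obtain ⟨l, -, rfl⟩ := Finset.mem_image.1 hx
    by_cases hl : l ∈ B
    · exact Finset.mem_union_right _ (Finset.mem_image_of_mem _ hl)
    · exact Finset.mem_union_left _ (Finset.mem_image.2
        ⟨_, Finset.mem_image_of_mem _ (Finset.mem_univ l), hf l hl⟩)
  have hcard : count m v ≤ ((Finset.univ.image fun l => ph m (w l)).image f).card + B.card :=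
    (Finset.card_le_card hsub).trans ((Finset.card_union_le _ _).trans
      (Nat.add_le_add_left Finset.card_image_le _))
  have hcard' : ((Finset.univ.image fun l => ph m (w l)).image f).card ≤ count m w :=
    Finset.card_image_le
  have hsum : ∑ l, (top (v l) : ℕ) + B.card ≤ ∑ l, (top (w l) : ℕ) := by
    rw [hB, Finset.card_filter, ← Finset.sum_add_distrib]
    refine Finset.sum_le_sum fun l _ => ?_
    have := Fin.le_def.1 (htop l)
    split_ifs with h
    · have h' : (top (w l) : ℕ) ≠ top (v l) := fun e => h (Fin.ext e)
      omega
    · omega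
  have hpos : ∀ x : Fin k → Sph n, 0 < count m x := fun x =>
    Finset.card_pos.2 ⟨_, Finset.mem_image_of_mem _ (Finset.mem_univ z)⟩
  have hv := hpos v
  have hw := hpos w
  unfold level at hlev
  have hB0 : B = ∅ := by
    rw [← Finset.card_eq_zero]; omega
  have hmem : ∀ l, l ∉ B := by simp [hB0]
  have htt : ∀ l, top (w l) = top (v l) := fun l => by simpa [hB] using hmem l
  have hBc : B.card = 0 := by simp [hB0]
  have hfi : Set.InjOn f (Finset.univ.image fun l => ph m (w l)) :=
    Finset.card_image_iff.1 (le_antisymm hcard' (by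
      have : count m w ≤ count m v := by omega
      change count m w ≤ _
      omega))
  refine Prod.ext (funext htt) ?_
  ext l
  simp only [type, Finset.mem_filter, Finset.mem_univ, true_and]
  refine ⟨hinj l (hmem l) z (hmem z), fun h => ?_⟩
  refine hfi (by simp) (by simp) ?_
  rw [hf l (hmem l), hf z (hmem z), h]

end Sph

/-! ### Motion planning near a stratum -/

namespace Sph

namespace Plan

variable {n k : ℕ} (m : ℕ) (i : Fin k → Fin (n + 1)) (T : Finset (Fin k)) (z : Fin k)

/-- The phase of the chosen coordinate of the entry `l`. -/
noncomputable def p (v : Fin k → Sph n) (l : Fin k) : ℂ := phase ((v l).1 (i l))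

/-- The quotient of the `m`-th powers of the phases of the entries `l` and `z`, with the opposite
sign if `l` does not belong to `T`. -/
noncomputable def ratio (v : Fin k → Sph n) (l : Fin k) : ℂ :=
  (if l ∈ T then 1 else -1) * (p i v l / p i v z) ^ m

/-- The tuples near the stratum of type `(i, T)`: the chosen coordinates do not vanish, and all
the quotients of phases avoid the cut of the logarithm. -/
def dom : Set (Fin k → Sph n) := {v | ∀ l, (v l).1 (i l) ≠ 0 ∧ ratio m i T z v l ≠ -1}

/-- A continuous choice of the angle between the `m`-th powers of the phases. -/
noncomputable def angle (v : Fin k → Sph n) (l : Fin k) : ℝ :=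
  Complex.arg (ratio m i T z v l) + if l ∈ T then 0 else Real.pi

/-- Tent function supported near the time at which a path has to pass through the entry `l`. -/
noncomputable def tent (k : ℕ) (l : Fin k) (t : ℝ) : ℝ := max 0 (1 - 2 * |t * ((k : ℝ) - 1) - l|)

/-- A path joining the entries, each normalised to have a positive chosen coordinate, through the
first basis vector. -/
noncomputable def vec (v : Fin k → Sph n) (t : ℝ) : EuclideanSpace ℂ (Fin (n + 1)) :=
  ((1 - ∑ l, tent k l t : ℝ) : ℂ) • (basis 0 : Sph n).1 +
    ∑ l, (tent k l t : ℂ) • ((p i v l)⁻¹ • (v l).1)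

/-- The unit complex number by which the path `vec` is multiplied at the time `t`, chosen so that
at the prescribed times the product is a translate of the respective entry under the `m`-th roots
of unity. -/
noncomputable def scal (v : Fin k → Sph n) (t : ℝ) : ℂ :=
  Complex.exp (((∑ l, angle m i T z v l * tent k l t) / m : ℝ) * Complex.I) * p i v z

variable {m i T z}

theorem norm_p {v : Fin k → Sph n} (hv : v ∈ dom m i T z) (l : Fin k) : ‖p i v l‖ = 1 :=
  norm_phase (hv l).1

theorem p_ne_zero {v : Fin k → Sph n} (hv : v ∈ dom m i T z) (l : Fin k) : p i v l ≠ 0 :=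
  phase_ne_zero (hv l).1

theorem norm_ratio {v : Fin k → Sph n} (hv : v ∈ dom m i T z) (l : Fin k) :
    ‖ratio m i T z v l‖ = 1 := by
  have : ‖(if l ∈ T then (1 : ℂ) else -1)‖ = 1 := by split_ifs <;> simp
  rw [ratio, norm_mul, norm_pow, norm_div, norm_p hv, norm_p hv, this]
  simp

theorem ratio_mem {v : Fin k → Sph n} (hv : v ∈ dom m i T z) (l : Fin k) :
    ratio m i T z v l ∈ Complex.slitPlane := by
  rw [Complex.mem_slitPlane_iff_arg]
  refine ⟨fun h => (hv l).2 ?_, fun h => by simpa [h] using norm_ratio hv l⟩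
  have := Complex.norm_mul_exp_arg_mul_I (ratio m i T z v l)
  rw [norm_ratio hv l, h, Complex.exp_pi_mul_I] at this
  simpa using this.symm

theorem exp_angle {v : Fin k → Sph n} (hv : v ∈ dom m i T z) (l : Fin k) :
    Complex.exp (angle m i T z v l * Complex.I) = (p i v l / p i v z) ^ m := by
  have := Complex.norm_mul_exp_arg_mul_I (ratio m i T z v l)
  rw [norm_ratio hv l, Complex.ofReal_one, one_mul] at this
  rw [angle, Complex.ofReal_add, add_mul, Complex.exp_add, this, ratio]
  split_ifs <;> simp [Complex.exp_pi_mul_I]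

theorem tent_nonneg (l : Fin k) (t : ℝ) : 0 ≤ tent k l t := le_max_left _ _

theorem tent_le (l : Fin k) (t : ℝ) : tent k l t ≤ 1 :=
  max_le zero_le_one (by linarith [abs_nonneg (t * ((k : ℝ) - 1) - l)])

theorem tent_unique {l l' : Fin k} (h : l ≠ l') {t : ℝ} (hl : tent k l t ≠ 0) :
    tent k l' t = 0 := by
  have h1 : |t * ((k : ℝ) - 1) - l| < 1 / 2 := by
    by_contra! hc
    exact hl (max_eq_left (by linarith))
  have h2 : (1 : ℝ) ≤ |(l : ℝ) - l'| := by
    have : (1 : ℤ) ≤ |(l : ℤ) - l'| := Int.one_le_abs (sub_ne_zero.2 fun e => h (Fin.ext (by omega)))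
    exact_mod_cast this
  refine max_eq_left ?_
  have := abs_sub_le (l : ℝ) (t * ((k : ℝ) - 1)) l'
  rw [abs_sub_comm (l : ℝ) (t * ((k : ℝ) - 1))] at this
  linarith

theorem tent_time (l : Fin k) {t : ℝ} (ht : t * ((k : ℝ) - 1) = l) : tent k l t = 1 := by
  simp [tent, ht]

theorem vec_of_ne_zero (v : Fin k → Sph n) {t : ℝ} {l : Fin k} (hl : tent k l t ≠ 0) :
    vec i v t = ((1 - tent k l t : ℝ) : ℂ) • (basis 0 : Sph n).1 +
      (tent k l t : ℂ) • ((p i v l)⁻¹ • (v l).1) := by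
  rw [vec, Finset.sum_eq_single l, Finset.sum_eq_single l]
  · intro l' _ h; rw [tent_unique h.symm hl]; simp
  · simp
  · intro l' _ h; exact tent_unique h.symm hl
  · simp

theorem p_inv_mul {v : Fin k → Sph n} (hv : v ∈ dom m i T z) (l : Fin k) :
    (p i v l)⁻¹ * (v l).1 (i l) = (‖(v l).1 (i l)‖ : ℂ) := by
  have := (hv l).1
  have : (‖(v l).1 (i l)‖ : ℂ) ≠ 0 := by simpa using this
  rw [p, phase]
  field_simp

/-- The path `vec` avoids the origin, as no normalised entry is antipodal to the first basis
vector. -/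
theorem vec_ne_zero {v : Fin k → Sph n} (hv : v ∈ dom m i T z) (t : ℝ) : vec i v t ≠ 0 := by
  by_cases h : ∃ l, tent k l t ≠ 0
  · obtain ⟨l, hl⟩ := h
    rw [vec_of_ne_zero v hl]
    intro h0
    have hpos : 0 < tent k l t := lt_of_le_of_ne (tent_nonneg l t) hl.symm
    have hv0 : 0 < ‖(v l).1 (i l)‖ := norm_pos_iff.2 (hv l).1
    have h1 := congrArg (fun x : EuclideanSpace ℂ (Fin (n + 1)) => x (i l)) h0
    simp only [PiLp.add_apply, PiLp.smul_apply, smul_eq_mul, PiLp.zero_apply, p_inv_mul hv] at h1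
    -- the coordinate `i l` is a nonnegative multiple of `1` plus a positive one
    have hb : (basis 0 : Sph n).1 (i l) = ((if (i l : ℕ) = 0 then 1 else 0 : ℝ) : ℂ) := by
      by_cases h : (i l : ℕ) = 0
      · have h' : i l = ⟨min 0 n, by omega⟩ := Fin.ext (by simp [h])
        rw [if_pos h, h']
        simp [basis]
      · rw [if_neg h]
        simpa [basis] using fun e : i l = 0 => h (by simp [e])
    rw [hb, ← Complex.ofReal_mul, ← Complex.ofReal_mul, ← Complex.ofReal_add,
      Complex.ofReal_eq_zero] at h1
    have h2 : 0 ≤ (1 - tent k l t) * (if (i l : ℕ) = 0 then 1 else 0 : ℝ) :=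
      mul_nonneg (by linarith [tent_le l t]) (by split_ifs <;> norm_num)
    have h3 := mul_pos hpos hv0
    linarith
  · push Not at h
    intro h0
    have := norm_coe (basis 0 : Sph n)
    simp [vec, h] at h0
    simp [h0] at this

theorem norm_scal {v : Fin k → Sph n} (hv : v ∈ dom m i T z) (t : ℝ) :
    ‖scal m i T z v t‖ = 1 := by
  rw [scal, norm_mul, norm_p hv, Complex.norm_exp_ofReal_mul_I, one_mul]

/-- The planned path on the sphere. Replacing an entry of `v` by a translate under the `m`-th roots
of unity multiplies the whole path by an `m`-th root of unity. -/
noncomputable def path (v : dom m i T z) (t : ℝ) : Sph n :=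
  ⟨scal m i T z v.1 t • ((‖vec i v.1 t‖⁻¹ : ℝ) : ℂ) • vec i v.1 t, by
    have := norm_ne_zero_iff.2 (vec_ne_zero v.2 t)
    rw [mem_sphere_zero_iff_norm, norm_smul, norm_smul, norm_scal v.2, Complex.norm_real,
      norm_inv, norm_norm, one_mul, inv_mul_cancel₀ this]⟩

theorem continuous_p (l : Fin k) : Continuous fun v : dom m i T z => p i v.1 l := by
  rw [continuous_iff_continuousAt]
  intro v
  have hc : Continuous fun w : Fin k → Sph n => (w l).1 (i l) := by fun_prop
  exact ContinuousAt.comp (f := fun v : dom m i T z => (v.1 l).1 (i l))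
    (continuousAt_phase (v.2 l).1) (hc.comp continuous_subtype_val).continuousAt

theorem continuous_angle (l : Fin k) :
    Continuous fun v : dom m i T z => angle m i T z v.1 l := by
  refine Continuous.add ?_ continuous_const
  have h : Continuous fun v : dom m i T z => ratio m i T z v.1 l :=
    continuous_const.mul (((continuous_p l).div (continuous_p z) fun v => p_ne_zero v.2 z).pow m)
  rw [continuous_iff_continuousAt]
  intro v
  exact ContinuousAt.comp (f := fun v : dom m i T z => ratio m i T z v.1 l)
    (Complex.continuousAt_arg (ratio_mem v.2 l)) h.continuousAt

theorem continuous_path :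
    Continuous fun q : dom m i T z × unitInterval => path q.1 (q.2 : ℝ) := by
  have hp : ∀ l, Continuous fun q : dom m i T z × unitInterval => p i q.1.1 l := fun l =>
    (continuous_p l).comp continuous_fst
  have ha : ∀ l, Continuous fun q : dom m i T z × unitInterval => angle m i T z q.1.1 l :=
    fun l => (continuous_angle l).comp continuous_fst
  have ht : ∀ l, Continuous fun q : dom m i T z × unitInterval => tent k l (q.2 : ℝ) := fun l => by
    unfold tent; fun_prop
  have hpi : ∀ l, Continuous fun q : dom m i T z × unitInterval => (p i q.1.1 l)⁻¹ := fun l =>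
    (hp l).inv₀ fun q => p_ne_zero q.1.2 l
  have hs : Continuous fun q : dom m i T z × unitInterval => scal m i T z q.1.1 (q.2 : ℝ) := by
    unfold scal; fun_prop
  have hv : Continuous fun q : dom m i T z × unitInterval => vec i q.1.1 (q.2 : ℝ) := by
    have hl : ∀ l, Continuous fun w : Fin k → Sph n => (w l).1 := fun l => by fun_prop
    have hl' : ∀ l, Continuous fun q : dom m i T z × unitInterval => (q.1.1 l).1 := fun l =>
      (hl l).comp (continuous_subtype_val.comp continuous_fst)
    unfold vec
    exact ((Complex.continuous_ofReal.comp (continuous_const.sub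
      (continuous_finsetSum _ fun l _ => ht l))).smul continuous_const).add
      (continuous_finsetSum _ fun l _ =>
        (Complex.continuous_ofReal.comp (ht l)).smul ((hpi l).smul (hl' l)))
  have hn : Continuous fun q : dom m i T z × unitInterval => ‖vec i q.1.1 (q.2 : ℝ)‖⁻¹ :=
    hv.norm.inv₀ fun q => norm_ne_zero_iff.2 (vec_ne_zero q.1.2 _)
  exact (hs.smul ((Complex.continuous_ofReal.comp hn).smul hv)).subtype_mk _

/-- A criterion for two points to have the same image in the lens space. -/
theorem proj_eq_of_smul [NeZero m] {x y : Sph n} (c : ℂ) (hc : c ^ m = 1) (h : y.1 = c • x.1) :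
    proj m n x = proj m n y := by
  obtain ⟨t, -, ht⟩ := (isPrimitiveRoot_om m).eq_pow_of_pow_eq_one hc
  exact proj_eq_iff.2 ⟨t, Subtype.ext (by rw [coe_om_iter, ht, h])⟩

theorem proj_path [NeZero m] (v : dom m i T z) (l : Fin k) {t : ℝ}
    (ht : t * ((k : ℝ) - 1) = l) : proj m n (path v t) = proj m n (v.1 l) := by
  have h1 := tent_time l ht
  have h0 : ∀ l', l' ≠ l → tent k l' t = 0 := fun l' h => tent_unique h.symm (by simp [h1])
  have hvec : vec i v.1 t = (p i v.1 l)⁻¹ • (v.1 l).1 := by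
    rw [vec_of_ne_zero v.1 (l := l) (by simp [h1]), h1]; simp
  have hn : ‖vec i v.1 t‖ = 1 := by
    rw [hvec, norm_smul, norm_inv, norm_p v.2, norm_coe]; simp
  have hsum : ∑ l', angle m i T z v.1 l' * tent k l' t = angle m i T z v.1 l := by
    rw [Finset.sum_eq_single l (fun l' _ h => by rw [h0 l' h, mul_zero]) (by simp), h1, mul_one]
  refine (proj_eq_of_smul (scal m i T z v.1 t * (p i v.1 l)⁻¹) ?_ ?_).symm
  · have hl := p_ne_zero v.2 l
    have hz := p_ne_zero v.2 z
    have hm : (m : ℂ) ≠ 0 := by exact_mod_cast NeZero.ne m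
    have hexp : Complex.exp ((angle m i T z v.1 l / m : ℝ) * Complex.I) ^ m =
        (p i v.1 l / p i v.1 z) ^ m := by
      rw [← Complex.exp_nat_mul, ← exp_angle v.2]
      congr 1; push_cast; field_simp
    rw [scal, hsum, mul_pow, mul_pow, hexp, ← mul_pow, ← mul_pow]
    field_simp
    simp
  · change scal m i T z v.1 t • ((‖vec i v.1 t‖⁻¹ : ℝ) : ℂ) • vec i v.1 t = _
    rw [hn, hvec, inv_one, Complex.ofReal_one, one_smul, smul_smul]

theorem path_congr [NeZero m] (x y : dom m i T z) (t : ℝ)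
    (h : projk m n k x.1 = projk m n k y.1) : proj m n (path x t) = proj m n (path y t) := by
  have h' : ∀ l, proj m n (x.1 l) = proj m n (y.1 l) := congrFun h
  have hpm : ∀ l, p i x.1 l ^ m = p i y.1 l ^ m := fun l => phase_pow_congr (h' l) _
  have hang : ∀ l, angle m i T z x.1 l = angle m i T z y.1 l := fun l => by
    rw [angle, angle, ratio, ratio, div_pow, div_pow, hpm, hpm]
  have hvec : vec i x.1 t = vec i y.1 t := by
    unfold vec
    congr 1
    refine Finset.sum_congr rfl fun l _ => ?_
    congr 1
    obtain ⟨s, hs⟩ := proj_eq_iff.1 (h' l)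
    have hne : Complex.exp (2 * Real.pi * Complex.I / m) ^ s ≠ 0 :=
      pow_ne_zero _ (Complex.exp_ne_zero _)
    rw [p, p, hs, phase_iter, coe_om_iter, smul_smul]
    congr 1
    rw [mul_inv]
    field_simp
  have hz := p_ne_zero x.2 z
  refine proj_eq_of_smul (p i y.1 z / p i x.1 z) ?_ ?_
  · rw [div_pow, hpm, div_self (pow_ne_zero _ (p_ne_zero y.2 z))]
  · change scal m i T z y.1 t • ((‖vec i y.1 t‖⁻¹ : ℝ) : ℂ) • vec i y.1 t =
      _ • scal m i T z x.1 t • ((‖vec i x.1 t‖⁻¹ : ℝ) : ℂ) • vec i x.1 t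
    rw [hvec, smul_smul (p i y.1 z / p i x.1 z)]
    congr 1
    simp only [scal, hang]
    field_simp

variable (m i T z) in
theorem isOpen_dom : IsOpen (dom m i T z) := by
  rw [isOpen_iff_mem_nhds]
  intro v hv
  have hc : ∀ l, Continuous fun w : Fin k → Sph n => (w l).1 (i l) := fun l => by fun_prop
  have hp : ∀ l, ContinuousAt (fun w : Fin k → Sph n => p i w l) v := fun l =>
    ContinuousAt.comp (f := fun w : Fin k → Sph n => (w l).1 (i l))
      (continuousAt_phase (hv l).1) (hc l).continuousAt
  have hr : ∀ l, ContinuousAt (fun w : Fin k → Sph n => ratio m i T z w l) v := fun l =>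
    continuousAt_const.mul (((hp l).div (hp z) (p_ne_zero hv z)).pow m)
  exact Filter.eventually_all.2 fun l =>
    ((hc l).continuousAt.eventually_ne (hv l).1).and ((hr l).eventually_ne (hv l).2)

/-- Every open set of tuples near a stratum gives rise to a section of `π_k`. -/
theorem hasSec [NeZero m] (hk : 2 ≤ k) {Q : Set (Fin k → Sph n)} (hQ : IsOpen Q)
    (hQd : Q ⊆ dom m i T z) : HasSec k (projk m n k '' Q) := by
  refine hasSec_image hQ
    ⟨fun q => proj m n (path ⟨q.1.1, hQd q.1.2⟩ (q.2 : ℝ)), ?_⟩ ?_ ?_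
  · exact isQuotientMap_proj.continuous.comp (continuous_path.comp
      (f := fun q : Q × unitInterval => ((⟨q.1.1, hQd q.1.2⟩ : dom m i T z), q.2)) (by fun_prop))
  · intro x y t h
    exact path_congr _ _ _ h
  · intro x l
    refine proj_path _ l ?_
    have hk' : (0 : ℝ) < (k : ℝ) - 1 := by
      have : (2 : ℝ) ≤ k := by exact_mod_cast hk
      linarith
    have hl : (l : ℝ) ≤ (k : ℝ) - 1 := by
      have : ((l + 1 : ℕ) : ℝ) ≤ k := by exact_mod_cast l.2
      push_cast at this; linarith
    change (Set.projIcc (0 : ℝ) 1 zero_le_one ((l : ℝ) / ((k : ℝ) - 1)) : ℝ) * _ = _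
    rw [Set.projIcc_of_mem zero_le_one
      ⟨div_nonneg (Nat.cast_nonneg _) hk'.le, (div_le_one hk').2 hl⟩]
    exact div_mul_cancel₀ _ hk'.ne'

/-- Every tuple lies near its own stratum. -/
theorem mem_dom (m : ℕ) (z : Fin k) (v : Fin k → Sph n) :
    v ∈ dom m (type m z v).1 (type m z v).2 z := by
  classical
  intro l
  refine ⟨top_ne_zero (v l), ?_⟩
  have hz : ph m (v z) ≠ 0 := pow_ne_zero _ (phase_ne_zero (top_ne_zero _))
  have hr : (p (type m z v).1 v l / p (type m z v).1 v z) ^ m = ph m (v l) / ph m (v z) :=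
    div_pow _ _ _
  have hl : l ∈ (type m z v).2 ↔ ph m (v l) = ph m (v z) := by simp [type]
  rw [ratio, hr]
  by_cases h : ph m (v l) = ph m (v z)
  · rw [if_pos (hl.2 h), h, div_self hz]
    norm_num
  · rw [if_neg (fun h' => h (hl.1 h'))]
    intro h'
    rw [neg_one_mul, neg_inj, div_eq_one_iff_eq hz] at h'
    exact h h'

end Plan

end Sph

/-! ### The upper bound -/

namespace Sph

variable {n m k : ℕ}

/-- The stratum of level `a` and type `τ`. -/
def stratum (m : ℕ) (z : Fin k) (a : ℕ) (τ : (Fin k → Fin (n + 1)) × Finset (Fin k)) :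
    Set (Fin k → Sph n) :=
  {v | level m v = a ∧ type m z v = τ}

/-- Tuples strictly closer to the stratum of type `τ` than to all other strata of level `a`, and
on which the planner for the type `τ` is defined. -/
def nbhd (m : ℕ) (z : Fin k) (a : ℕ) (τ : (Fin k → Fin (n + 1)) × Finset (Fin k)) :
    Set (Fin k → Sph n) :=
  {x | ∀ τ', τ' ≠ τ → Metric.infEDist x (stratum m z a τ) < Metric.infEDist x (stratum m z a τ')} ∩
    Plan.dom m τ.1 τ.2 z

theorem isOpen_nbhd (z : Fin k) (a : ℕ) (τ : (Fin k → Fin (n + 1)) × Finset (Fin k)) :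
    IsOpen (nbhd m z a τ) := by
  refine IsOpen.inter ?_ (Plan.isOpen_dom _ _ _ _)
  simp only [Set.ofPred_forall]
  exact isOpen_iInter_of_finite fun τ' => isOpen_iInter_of_finite fun _ =>
    isOpen_lt Metric.continuous_infEDist Metric.continuous_infEDist

theorem mem_nbhd (z : Fin k) (v : Fin k → Sph n) :
    v ∈ nbhd m z (level m v) (type m z v) := by
  refine ⟨fun τ' h => ?_, Plan.mem_dom m z v⟩
  rw [Metric.infEDist_zero_of_mem (show v ∈ stratum m z (level m v) (type m z v) from ⟨rfl, rfl⟩),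
    pos_iff_ne_zero]
  intro h0
  have hcl := Metric.mem_closure_iff_infEDist_zero.2 h0
  obtain ⟨w, hw, hw'⟩ := mem_closure_iff_nhds.1 hcl _ (eventually_type m z v)
  exact h (hw'.2.symm.trans (hw hw'.1))

/-- Strata are unions of fibres, and the deck transformations are isometries. -/
theorem infEDist_stratum_le [NeZero m] (z : Fin k) (a : ℕ)
    (τ : (Fin k → Fin (n + 1)) × Finset (Fin k)) {x y : Fin k → Sph n}
    (h : projk m n k x = projk m n k y) :
    Metric.infEDist y (stratum m z a τ) ≤ Metric.infEDist x (stratum m z a τ) := by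
  choose t ht using fun l => proj_eq_iff.1 (congrFun h l : proj m n (x l) = proj m n (y l))
  refine Metric.le_infEDist.2 fun w hw => ?_
  let w' : Fin k → Sph n := fun l => (om m)^[t l] (w l)
  have hww : projk m n k w = projk m n k w' := funext fun l => proj_eq_iff.2 ⟨t l, rfl⟩
  have hd : edist y w' = edist x w := by
    rw [edist_pi_def, edist_pi_def]
    refine Finset.sup_congr rfl fun l _ => ?_
    change edist (y l) ((om m)^[t l] (w l)) = _
    rw [ht l, om, rot_iter, edist_dist, dist_rot, edist_dist]
  rw [← hd]
  exact Metric.infEDist_le_edist_of_mem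
    ⟨(level_congr hww).symm.trans hw.1, (type_congr z hww).symm.trans hw.2⟩

/-- The neighbourhoods of distinct strata of the same level have disjoint images. -/
theorem nbhd_disjoint [NeZero m] (z : Fin k) (a : ℕ)
    {τ τ' : (Fin k → Fin (n + 1)) × Finset (Fin k)} {u : Fin k → LensSpace m n}
    (h : u ∈ projk m n k '' nbhd m z a τ) (h' : u ∈ projk m n k '' nbhd m z a τ') : τ = τ' := by
  obtain ⟨x, hx, rfl⟩ := h
  obtain ⟨y, hy, hxy⟩ := h'
  by_contra hne
  have h1 := hx.1 τ' (Ne.symm hne)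
  have h2 := hy.1 τ hne
  exact absurd (h1.trans_le ((infEDist_stratum_le z a τ' hxy).trans_lt h2).le)
    (infEDist_stratum_le z a τ hxy.symm).not_gt

/-- The `a`-th covering set is the disjoint union of the neighbourhoods of the strata of level
`a`. -/
theorem upper_bound (hk : 2 ≤ k) (hm : 2 ≤ m) : TCCoverAt (LensSpace m n) k (k * (2 * n + 1)) := by
  have : NeZero m := ⟨by omega⟩
  let z : Fin k := ⟨0, by omega⟩
  refine ⟨fun a => ⋃ τ, projk m n k '' nbhd m z a τ, fun a => ?_, ?_, fun a => ?_⟩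
  · exact isOpen_iUnion fun τ => isOpenMap_projk _ (isOpen_nbhd z a τ)
  · refine Set.eq_univ_of_forall fun u => ?_
    choose v hv using fun l => isQuotientMap_proj.surjective (u l)
    obtain rfl : projk m n k v = u := funext hv
    exact Set.mem_iUnion.2 ⟨⟨level m v, level_lt (by omega) v⟩,
      Set.mem_iUnion.2 ⟨type m z v, v, mem_nbhd z v, rfl⟩⟩
  · exact HasSec.iUnion (fun τ => isOpenMap_projk _ (isOpen_nbhd z a τ))
      (fun _ _ _ => nbhd_disjoint z a)
      fun τ => Plan.hasSec hk (isOpen_nbhd z a τ) Set.inter_subset_right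

end Sph

/-- If `m` does not divide `C(2n, n)^⌊k/2⌋`, then `TC_k(L^{2n+1}_m) = k(2n+1)`. -/
theorem stmt15 (k m n : ℕ) (hk : 2 ≤ k) (hm : 2 ≤ m) (hn : 1 ≤ n)
    (hdvd : ¬ (m ∣ (Nat.choose (2 * n) n) ^ (k / 2))) :
    higherTC (LensSpace m n) k = k * (2 * n + 1) :=
  le_antisymm (Nat.sInf_le (Sph.upper_bound hk hm))
    (le_csInf ⟨_, Sph.upper_bound hk hm⟩ fun _ hr => Sph.lower_bound hk hm hdvd hr)
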